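/- Let B ⊂ A be a regular inclusion of simple unital C*-algebras with a finite-index conditional expectation, and let E₀ : A → B be the minimal conditional expectation. Then E₀ admits a unitary orthonormal quasi-basis: there exist finitely many unitaries v_1, …, v_m ∈ A such that E₀(v_k* v_l) = δ_{kl}·1 for all k, l and x = Σ_k E₀(x v_k) v_k* for every x ∈ A. -/

import Mathlib

/-!
Let `C` be the relative commutant of `B`. Finite index makes `C` finite-dimensional, and the
minimal central projections of `C` are permuted by the normalizer; the sum over an orbit is
central in `A` by regularity, so there is a single orbit and `C` is a direct sum of matrix
algebras of one common size. Averaging `E₀` gives an expectation `E₁` that restricts to an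
invariant trace on `C`, and for it the Weyl (clock and shift) unitaries `w` of `C` form an
orthonormal basis of `C`. Normalizing unitaries from distinct cosets of `U(B) U(C)` are orthogonal
for every expectation, so there are finitely many cosets, and the products `v` of coset
representatives with `w` form a unitary orthonormal quasi-basis of `E₁`, whose index is therefore
their number `m`.

Let `l` be a quasi-basis of `E₀` of index `r₀ ≤ m`, and let `y k = l k - ∑ i, v i E₀ (v i* l k)`.
Bessel's identity and the trace property give `E₁ (∑ k, y k (y k)*) = (r₀ - m) 1 ≤ 0`, so `y = 0`:
the family `v` is a quasi-basis of `E₀` as well, and comparing the two expansions shows that it is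
orthonormal for `E₀`.
-/

namespace RegularInclusion

variable {A : Type*} [NormedRing A] [StarRing A] [CStarRing A] [CompleteSpace A]
  [NormedAlgebra ℂ A] [StarModule ℂ A]

/-- A conditional expectation of `A` onto the subset `B`: a `ℂ`-linear positive
`B`-bimodular projection of `A` onto `B`. -/
def IsCondExp (B : Set A) (E : A →ₗ[ℂ] A) : Prop :=
  (∀ x, E x ∈ B) ∧ (∀ b ∈ B, E b = b) ∧
  (∀ x, ∃ y, E (star x * x) = star y * y) ∧
  (∀ b₁ ∈ B, ∀ b₂ ∈ B, ∀ x, E (b₁ * x * b₂) = b₁ * E x * b₂)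

/-- `l` is a right quasi-basis for `E`, witnessing finite index. -/
def IsRightQB (E : A →ₗ[ℂ] A) {n : ℕ} (l : Fin n → A) : Prop :=
  ∀ x, x = ∑ i, E (x * l i) * star (l i)

/-- The centralizer (relative commutant) `C_A(B)` of `B` in `A`. -/
def cent (B : Set A) : Set A := {x | ∀ b ∈ B, x * b = b * x}

/-- The normalizer `N_A(B) = {u ∈ U(A) : uBu* = B}` of `B` in `A`. -/
def normalizer (B : Set A) : Set A :=
  {u | u ∈ unitary A ∧ (fun x => u * x * star u) '' B = B}

/-- The set `U(B)` of unitaries of `B`. -/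
def UB (B : Set A) : Set A := {b | b ∈ B ∧ b ∈ unitary A}

/-- The set `U(B)·U(C_A(B))` of products of a unitary of `B` and a unitary of
the centralizer of `B`. -/
def UBC (B : Set A) : Set A :=
  {x | ∃ b c, b ∈ B ∧ b ∈ unitary A ∧ c ∈ cent B ∧ c ∈ unitary A ∧ x = b * c}

/-- Simplicity of the C*-algebra (given as the subset `S` of `A`): the only closed
two-sided ideals of `S` are `{0}` and `S`. -/
def IsSimpleCStar (S : Set A) : Prop :=
  ∀ I : Set A, I ⊆ S → IsClosed I → (0 : A) ∈ I →
    (∀ x ∈ I, ∀ y ∈ I, x + y ∈ I) →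
    (∀ x ∈ I, ∀ b ∈ S, x * b ∈ I ∧ b * x ∈ I) →
    I = {0} ∨ I = S

/-- The intermediate C*-subalgebra `C := C*(B ∪ C_A(B))` generated by `B` and the
centralizer of `B`. -/
def genC (B : Set A) : StarSubalgebra ℂ A :=
  (StarAlgebra.adjoin ℂ (B ∪ cent B)).topologicalClosure

/-- Regularity of the inclusion `B ⊆ A`: the normalizer of `B` generates `A` as a
C*-algebra. -/
def IsRegular (B : Set A) : Prop :=
  (StarAlgebra.adjoin ℂ (normalizer B)).topologicalClosure = ⊤

/-- `E₀` is the minimal conditional expectation of `A` onto `B`: the finite-index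
conditional expectation whose (scalar) Watatani index is least among all finite-index
conditional expectations onto `B`. -/
def IsMinimalCondExp (B : Set A) (E₀ : A →ₗ[ℂ] A) : Prop :=
  IsCondExp B E₀ ∧
  ∃ (r₀ : ℝ) (n : ℕ) (l : Fin n → A), IsRightQB E₀ l ∧
    (∑ i, l i * star (l i)) = (r₀ : ℂ) • 1 ∧
    ∀ E : A →ₗ[ℂ] A, IsCondExp B E → ∀ (m : ℕ) (μ : Fin m → A), IsRightQB E μ →
      ∀ r : ℝ, (∑ i, μ i * star (μ i)) = (r : ℂ) • 1 → r₀ ≤ r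

section Positivity

variable {𝒜 : Type*} [CStarAlgebra 𝒜]

attribute [local instance] CStarAlgebra.spectralOrder CStarAlgebra.spectralOrderedRing

open scoped ComplexOrder

lemma nonneg_of_smul_nonneg {t : ℂ} {q : 𝒜} (h : 0 ≤ t • q) (hq : 0 ≤ q) (hq₀ : q ≠ 0) :
    0 ≤ t := by
  have hconj : star t = t := by
    refine smul_left_injective ℂ hq₀ ?_
    simpa only [star_smul, (IsSelfAdjoint.of_nonneg hq).star_eq] using
      (IsSelfAdjoint.of_nonneg h).star_eq
  have ht : (t.re : ℂ) = t := Complex.conj_eq_iff_re.1 hconj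
  rw [← ht] at h ⊢
  refine Complex.zero_le_real.2 (not_lt.1 fun hneg => ?_)
  have hle : (t.re : ℂ) • q ≤ 0 := by
    rw [Complex.coe_smul]
    exact smul_nonpos_of_nonpos_of_nonneg hneg.le hq
  exact smul_ne_zero (Complex.ofReal_ne_zero.2 hneg.ne) hq₀ (le_antisymm hle h)

lemma nonneg_of_smul_one_nonneg [Nontrivial 𝒜] {t : ℂ} (h : 0 ≤ t • (1 : 𝒜)) : 0 ≤ t :=
  nonneg_of_smul_nonneg h zero_le_one one_ne_zero

theorem exists_basis_inner_eq_ite {𝕜 V : Type*} [RCLike 𝕜] [AddCommGroup V] [Module 𝕜 V]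
    [FiniteDimensional 𝕜 V] (core : InnerProductSpace.Core 𝕜 V) :
    ∃ f : Module.Basis (Fin (Module.finrank 𝕜 V)) 𝕜 V,
      ∀ i j, core.inner (f i) (f j) = if i = j then 1 else 0 := by
  let _ := core.toNormedAddCommGroup
  let _ := InnerProductSpace.ofCore core.toCore
  refine ⟨(stdOrthonormalBasis 𝕜 V).toBasis, ?_⟩
  simpa only [OrthonormalBasis.coe_toBasis] using
    orthonormal_iff_ite.1 (stdOrthonormalBasis 𝕜 V).orthonormal

theorem exists_basis_map_star_mul_eq_ite (T : 𝒜 →ₚ[ℂ] 𝒜) (V : Submodule ℂ 𝒜)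
    [FiniteDimensional ℂ V] {q : 𝒜} (hq : 0 ≤ q) (hq₀ : q ≠ 0)
    (hT : ∀ x ∈ V, ∀ y ∈ V, ∃ t : ℂ, T (star x * y) = t • q)
    (hdef : ∀ x ∈ V, T (star x * x) = 0 → x = 0) :
    ∃ f : Module.Basis (Fin (Module.finrank ℂ V)) ℂ V,
      ∀ i j, T (star (f i : 𝒜) * f j) = if i = j then q else 0 := by
  choose s hs using fun x y : V => hT x x.2 y y.2
  have inj := smul_left_injective ℂ hq₀
  obtain ⟨f, hf⟩ := exists_basis_inner_eq_ite
    { inner := s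
      conj_inner_symm := fun x y => inj <| by
        have h := congrArg star (hs y x)
        rw [← map_star, star_mul, star_star, hs] at h
        simpa only [star_smul, (IsSelfAdjoint.of_nonneg hq).star_eq, starRingEnd_apply] using h.symm
      re_inner_nonneg := fun x => by
        have h := T.map_nonneg (star_mul_self_nonneg (x : 𝒜))
        rw [hs] at h
        exact (Complex.nonneg_iff.1 (nonneg_of_smul_nonneg h hq hq₀)).1
      add_left := fun x y z => inj <| by
        simp only [add_smul, ← hs, Submodule.coe_add, star_add, add_mul, map_add]
      smul_left := fun x y r => inj <| by
        simp only [mul_smul, ← hs, Submodule.coe_smul, star_smul, smul_mul_assoc, map_smul,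
          starRingEnd_apply]
      definite := fun x hx => Subtype.ext <| hdef x x.2 <| by rw [hs, hx, zero_smul] }
  refine ⟨f, fun i j => ?_⟩
  rw [hs, show s (f i) (f j) = if i = j then 1 else 0 from hf i j, ite_smul, one_smul, zero_smul]

variable {B S : StarSubalgebra ℂ 𝒜} {E : 𝒜 →ₗ[ℂ] 𝒜} {ι κ : Type*} [Fintype ι] [Fintype κ]

namespace IsCondExp

lemma map_mul_left (h : IsCondExp (B : Set 𝒜) E) {b : 𝒜} (hb : b ∈ B) (x : 𝒜) :
    E (b * x) = b * E x := by
  simpa only [mul_one] using h.2.2.2 b hb 1 (one_mem B) x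

lemma map_mul_right (h : IsCondExp (B : Set 𝒜) E) {b : 𝒜} (hb : b ∈ B) (x : 𝒜) :
    E (x * b) = E x * b := by
  simpa only [one_mul] using h.2.2.2 1 (one_mem B) b hb x

lemma map_one (h : IsCondExp (B : Set 𝒜) E) : E 1 = 1 := h.2.1 1 (one_mem B)

/-- A conditional expectation as a bundled positive linear map. -/
noncomputable def toPositiveLinearMap (h : IsCondExp (B : Set 𝒜) E) : 𝒜 →ₚ[ℂ] 𝒜 :=
  PositiveLinearMap.mk₀ E fun x hx => by
    obtain ⟨y, rfl⟩ := CStarAlgebra.nonneg_iff_eq_star_mul_self.1 hx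
    obtain ⟨w, hw⟩ := h.2.2.1 y
    exact hw ▸ star_mul_self_nonneg w

lemma map_nonneg (h : IsCondExp (B : Set 𝒜) E) {x : 𝒜} (hx : 0 ≤ x) : 0 ≤ E x :=
  h.toPositiveLinearMap.map_nonneg hx

lemma map_star (h : IsCondExp (B : Set 𝒜) E) (x : 𝒜) : E (star x) = star (E x) :=
  StarHomClass.map_star h.toPositiveLinearMap x

lemma continuous (h : IsCondExp (B : Set 𝒜) E) : Continuous E :=
  map_continuous h.toPositiveLinearMap

lemma norm_map_le (h : IsCondExp (B : Set 𝒜) E) {x : 𝒜} (hx : 0 ≤ x) :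
    ‖E x‖ ≤ ‖x‖ := by
  cases subsingleton_or_nontrivial 𝒜
  · exact (congrArg norm (Subsingleton.elim (E x) x)).le
  · have hle := h.toPositiveLinearMap.norm_apply_le_of_nonneg x hx
    rwa [show h.toPositiveLinearMap 1 = 1 from h.map_one, norm_one, one_mul] at hle

end IsCondExp

/-- `l` is a quasi-basis for `E`, over an arbitrary finite index type. The expansion is taken on
the left, so that it is the reconstruction formula of a frame for the inner product
`⟨x, y⟩ = E (star x * y)`. -/
def IsQuasiBasis (E : 𝒜 →ₗ[ℂ] 𝒜) (l : ι → 𝒜) : Prop :=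
  ∀ x, ∑ i, l i * E (star (l i) * x) = x

/-- `v` is orthonormal for the `𝒜`-valued inner product `⟨x, y⟩ = E (star x * y)`. -/
def IsOrthonormal [DecidableEq ι] (E : 𝒜 →ₗ[ℂ] 𝒜) (v : ι → 𝒜) : Prop :=
  ∀ i j, E (star (v i) * v j) = if i = j then 1 else 0

lemma isQuasiBasis_iff_eq_sum_mul_star (h : IsCondExp (B : Set 𝒜) E) {l : ι → 𝒜} :
    IsQuasiBasis E l ↔ ∀ x, x = ∑ i, E (x * l i) * star (l i) := by
  have key (x : 𝒜) :
      star (∑ i, l i * E (star (l i) * x)) = ∑ i, E (star x * l i) * star (l i) := by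
    simp only [star_sum, star_mul, ← h.map_star, star_star]
  refine ⟨fun hl x => ?_, fun hl x => star_injective ?_⟩
  · simpa only [hl (star x), star_star] using key (star x)
  · rw [key, ← hl]

lemma isQuasiBasis_iff_isRightQB (h : IsCondExp (B : Set 𝒜) E) {n : ℕ} {l : Fin n → 𝒜} :
    IsQuasiBasis E l ↔ IsRightQB E l :=
  isQuasiBasis_iff_eq_sum_mul_star h

lemma IsQuasiBasis.comp_equiv {l : ι → 𝒜} (hl : IsQuasiBasis E l) (e : κ ≃ ι) :
    IsQuasiBasis E (l ∘ e) := fun x =>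
  (e.sum_comp fun i => l i * E (star (l i) * x)).trans (hl x)

namespace IsQuasiBasis

variable {l : κ → 𝒜}

lemma map_star_mul_eq_sum (h : IsCondExp (B : Set 𝒜) E) (hl : IsQuasiBasis E l) (x y : 𝒜) :
    E (star x * y) = ∑ k, E (star x * l k) * E (star (l k) * y) := by
  conv_lhs => rw [← hl y]
  simp only [Finset.mul_sum, map_sum, ← mul_assoc, h.map_mul_right (h.1 _)]

theorem sum_residual_mul_star (h : IsCondExp (B : Set 𝒜) E) (hl : IsQuasiBasis E l)
    (v : ι → 𝒜) :
    ∑ k, (l k - ∑ i, v i * E (star (v i) * l k)) * star (l k - ∑ i, v i * E (star (v i) * l k))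
      = ∑ k, l k * star (l k) - ∑ i, v i * star (v i) - ∑ i, v i * star (v i)
        + ∑ i, ∑ j, v i * E (star (v i) * v j) * star (v j) := by
  have cross : ∑ k, (∑ i, v i * E (star (v i) * l k)) * star (l k) = ∑ i, v i * star (v i) := by
    simp only [Finset.sum_mul, mul_assoc]
    rw [Finset.sum_comm]
    simp only [← Finset.mul_sum, ← (isQuasiBasis_iff_eq_sum_mul_star h).1 hl]
  have cross' : ∑ k, l k * star (∑ i, v i * E (star (v i) * l k)) = ∑ i, v i * star (v i) := by
    simpa only [star_sum, star_mul, star_star] using congrArg star cross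
  have square : ∑ k, (∑ i, v i * E (star (v i) * l k)) * star (∑ i, v i * E (star (v i) * l k))
      = ∑ i, ∑ j, v i * E (star (v i) * v j) * star (v j) := by
    simp only [star_sum, star_mul, ← h.map_star, star_star,
      hl.map_star_mul_eq_sum h (v _) (v _), Finset.mul_sum, Finset.sum_mul, mul_assoc]
    rw [Finset.sum_comm]
    conv_rhs => rw [Finset.sum_comm]
    exact Finset.sum_congr rfl fun j _ => Finset.sum_comm
  simp only [star_sub, mul_sub, sub_mul, Finset.sum_sub_distrib, cross, cross', square]
  abel

theorem sum_mul_star_le (h : IsCondExp (B : Set 𝒜) E) (hl : IsQuasiBasis E l) [DecidableEq ι]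
    {v : ι → 𝒜} (hv : IsOrthonormal E v) : ∑ i, v i * star (v i) ≤ ∑ k, l k * star (l k) := by
  have bessel := hl.sum_residual_mul_star h v
  simp only [hv _ _, mul_ite, mul_one, mul_zero, ite_mul, zero_mul, Finset.sum_ite_eq,
    Finset.mem_univ, if_true, sub_add_cancel] at bessel
  exact sub_nonneg.1 (bessel ▸ Finset.sum_nonneg fun _ _ => mul_star_self_nonneg _)

lemma mul_star_le (h : IsCondExp (B : Set 𝒜) E) (hl : IsQuasiBasis E l) {x : 𝒜}
    (hx : E (star x * x) ≤ 1) : x * star x ≤ ∑ k, l k * star (l k) := by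
  have bessel := hl.sum_residual_mul_star h fun _ : Unit => x
  simp only [Finset.univ_unique, Finset.sum_singleton] at bessel
  have hpos : 0 ≤ ∑ k, l k * star (l k) - x * star x - x * star x + x * E (star x * x) * star x :=
    bessel ▸ Finset.sum_nonneg fun _ _ => mul_star_self_nonneg _
  have hle : x * E (star x * x) * star x ≤ x * star x := by
    simpa only [mul_one] using star_right_conjugate_le_conjugate hx x
  refine sub_nonneg.1 (hpos.trans ?_)
  calc _ ≤ ∑ k, l k * star (l k) - x * star x - x * star x + x * star x := by gcongr
    _ = _ := sub_add_cancel _ _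

/-- The Pimsner–Popa inequality, in norm. -/
theorem norm_sq_le (h : IsCondExp (B : Set 𝒜) E) (hl : IsQuasiBasis E l) (x : 𝒜) :
    ‖x‖ ^ 2 ≤ ‖∑ k, l k * star (l k)‖ * ‖E (star x * x)‖ := by
  refine le_mul_of_forall_lt₀ fun r hr t ht => ?_
  have ht₀ : 0 < t := (norm_nonneg _).trans_lt ht
  have hE : E (star ((√t)⁻¹ • x) * ((√t)⁻¹ • x)) = t⁻¹ • E (star x * x) := by
    rw [star_smul, star_trivial, smul_mul_smul_comm, ← mul_inv, Real.mul_self_sqrt ht₀.le,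
      LinearMap.map_smul_of_tower]
  have hle : E (star ((√t)⁻¹ • x) * ((√t)⁻¹ • x)) ≤ 1 := by
    refine (CStarAlgebra.norm_le_one_iff_of_nonneg _ (h.map_nonneg (star_mul_self_nonneg _))).1 ?_
    rw [hE, norm_smul, norm_inv, Real.norm_of_nonneg ht₀.le, inv_mul_le_one₀ ht₀]
    exact ht.le
  have hnorm := CStarAlgebra.norm_le_norm_of_nonneg_of_le (mul_star_self_nonneg _)
    (hl.mul_star_le h hle)
  rw [CStarRing.norm_self_mul_star, norm_smul, ← pow_two, mul_pow, norm_inv, inv_pow,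
    Real.norm_of_nonneg (Real.sqrt_nonneg t), Real.sq_sqrt ht₀.le, inv_mul_le_iff₀ ht₀,
    mul_comm t] at hnorm
  exact hnorm.trans (by gcongr)

theorem eq_zero_of_map_star_mul_self_eq_zero (h : IsCondExp (B : Set 𝒜) E)
    (hl : IsQuasiBasis E l) {x : 𝒜} (hx : E (star x * x) = 0) : x = 0 := by
  have := hl.norm_sq_le h x
  rw [hx, norm_zero, mul_zero] at this
  exact norm_eq_zero.1 (pow_eq_zero_iff two_ne_zero |>.1 (this.antisymm (sq_nonneg _)))

end IsQuasiBasis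

/-- The relative commutant `B' ∩ 𝒜`, as a star subalgebra. -/
def commutant (B : StarSubalgebra ℂ 𝒜) : StarSubalgebra ℂ 𝒜 :=
  StarSubalgebra.centralizer ℂ (B : Set 𝒜)

lemma mem_commutant {c : 𝒜} : c ∈ commutant B ↔ ∀ b ∈ B, b * c = c * b := by
  refine (StarSubalgebra.mem_centralizer_iff ℂ).trans
    ⟨fun hc b hb => (hc b hb).1, fun hc b hb => ?_⟩
  exact ⟨hc b hb, hc (star b) (star_mem hb)⟩

lemma exists_eq_smul_one_of_isCentral (S : StarSubalgebra ℂ 𝒜) [Algebra.IsCentral ℂ S] {z : 𝒜}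
    (hz : z ∈ S) (hcomm : ∀ s ∈ S, s * z = z * s) : ∃ t : ℂ, z = t • 1 := by
  have hcenter : (⟨z, hz⟩ : S) ∈ Subalgebra.center ℂ S :=
    Subalgebra.mem_center_iff.2 fun s => Subtype.ext (hcomm s s.2)
  rw [Algebra.IsCentral.center_eq_bot, Algebra.mem_bot] at hcenter
  obtain ⟨t, ht⟩ := hcenter
  exact ⟨t, by simpa [Algebra.algebraMap_eq_smul_one] using (congrArg Subtype.val ht).symm⟩

namespace IsCondExp

variable [Algebra.IsCentral ℂ B]

lemma exists_map_eq_smul_one (h : IsCondExp (B : Set 𝒜) E) {c : 𝒜} (hc : c ∈ commutant B) :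
    ∃ t : ℂ, E c = t • 1 :=
  exists_eq_smul_one_of_isCentral B (h.1 c) fun b hb => by
    rw [← h.map_mul_left hb, mem_commutant.1 hc b hb, h.map_mul_right hb]

lemma exists_map_eq_ofReal_smul_one [Nontrivial 𝒜] (h : IsCondExp (B : Set 𝒜) E) {c : 𝒜}
    (hc : c ∈ commutant B) (hc₀ : 0 ≤ c) : ∃ r : ℝ, 0 ≤ r ∧ E c = (r : ℂ) • 1 := by
  obtain ⟨t, ht⟩ := h.exists_map_eq_smul_one hc
  obtain ⟨r, hr, rfl⟩ := RCLike.nonneg_iff_exists_ofReal.1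
    (nonneg_of_smul_one_nonneg (ht ▸ h.map_nonneg hc₀))
  exact ⟨r, hr, ht⟩

end IsCondExp

namespace IsQuasiBasis

variable [Algebra.IsCentral ℂ B] {l : κ → 𝒜}

theorem card_le_of_isOrthonormal [Nontrivial 𝒜] [DecidableEq ι] (h : IsCondExp (B : Set 𝒜) E)
    (hl : IsQuasiBasis E l) {c : ι → 𝒜} (hc : ∀ i, c i ∈ commutant B)
    (horth : IsOrthonormal E c) : (Fintype.card ι : ℝ) ≤ ‖∑ k, l k * star (l k)‖ ^ 2 := by
  choose r hr₀ hr using fun i => h.exists_map_eq_ofReal_smul_one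
    (mul_mem (hc i) (star_mem (hc i))) (mul_star_self_nonneg (c i))
  have one_le (i : ι) : 1 ≤ ‖∑ k, l k * star (l k)‖ * r i := calc
    (1 : ℝ) = ‖E (star (c i) * c i)‖ := by rw [horth i i, if_pos rfl, norm_one]
    _ ≤ ‖star (c i) * c i‖ := h.norm_map_le (star_mul_self_nonneg _)
    _ = ‖star (c i)‖ ^ 2 := by rw [CStarRing.norm_star_mul_self, norm_star, pow_two]
    _ ≤ _ := hl.norm_sq_le h (star (c i))
    _ = _ := by rw [star_star, hr, norm_smul, norm_one, mul_one, Complex.norm_of_nonneg (hr₀ i)]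
  have sum_le : ∑ i, r i ≤ ‖∑ k, l k * star (l k)‖ := calc
    ∑ i, r i = ‖E (∑ i, c i * star (c i))‖ := by
      rw [map_sum, Finset.sum_congr rfl fun i _ => hr i, ← Finset.sum_smul, ← Complex.ofReal_sum,
        norm_smul, norm_one, mul_one, Complex.norm_of_nonneg (Finset.sum_nonneg fun i _ => hr₀ i)]
    _ ≤ ‖∑ i, c i * star (c i)‖ :=
      h.norm_map_le (Finset.sum_nonneg fun _ _ => mul_star_self_nonneg _)
    _ ≤ _ := CStarAlgebra.norm_le_norm_of_nonneg_of_le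
      (Finset.sum_nonneg fun _ _ => mul_star_self_nonneg _) (hl.sum_mul_star_le h horth)
  calc (Fintype.card ι : ℝ) = ∑ _i : ι, (1 : ℝ) := by simp
    _ ≤ ∑ i, ‖∑ k, l k * star (l k)‖ * r i := Finset.sum_le_sum fun i _ => one_le i
    _ ≤ _ := by
      rw [← Finset.mul_sum, pow_two]
      gcongr

theorem exists_orthonormal_basis [Nontrivial 𝒜] (h : IsCondExp (B : Set 𝒜) E)
    (hl : IsQuasiBasis E l) (V : Submodule ℂ 𝒜) [FiniteDimensional ℂ V]
    (hV : ∀ x ∈ V, x ∈ commutant B) :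
    ∃ f : Module.Basis (Fin (Module.finrank ℂ V)) ℂ V, IsOrthonormal E fun i => (f i : 𝒜) :=
  exists_basis_map_star_mul_eq_ite h.toPositiveLinearMap V zero_le_one one_ne_zero
    (fun x hx y hy => h.exists_map_eq_smul_one (mul_mem (star_mem (hV x hx)) (hV y hy)))
    fun _ _ hx => hl.eq_zero_of_map_star_mul_self_eq_zero h hx

theorem finiteDimensional_commutant (h : IsCondExp (B : Set 𝒜) E) (hl : IsQuasiBasis E l) :
    FiniteDimensional ℂ (commutant B) := by
  cases subsingleton_or_nontrivial 𝒜
  · infer_instance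
  refine Module.rank_lt_aleph0_iff.1 (lt_of_le_of_lt (rank_le
    (n := ⌊‖∑ k, l k * star (l k)‖ ^ 2⌋₊) fun s hs => ?_) Cardinal.natCast_lt_aleph0)
  let V : Submodule ℂ 𝒜 := Submodule.span ℂ (Set.range fun i : s => ((i : commutant B) : 𝒜))
  have hV : V ≤ Subalgebra.toSubmodule (commutant B).toSubalgebra :=
    Submodule.span_le.2 (Set.range_subset_iff.2 fun i => i.1.2)
  have hindep := hs.map' (commutant B).toSubalgebra.val.toLinearMap
    (LinearMap.ker_eq_bot.2 Subtype.val_injective)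
  have hcard : Module.finrank ℂ V = s.card := by
    rw [← Fintype.card_coe]
    exact finrank_span_eq_card hindep
  have : FiniteDimensional ℂ V := FiniteDimensional.span_of_finite ℂ (Set.finite_range _)
  obtain ⟨f, hf⟩ := hl.exists_orthonormal_basis h V hV
  refine Nat.le_floor ?_
  simpa [hcard] using hl.card_le_of_isOrthonormal h (fun i => hV (f i).2) hf

end IsQuasiBasis

namespace IsSimpleCStar

theorem eq_zero_or_isUnit (hS : IsSimpleCStar (S : Set 𝒜)) (hclosed : IsClosed (S : Set 𝒜)) {d : 𝒜}
    (hd : d ∈ S) (hcomm : ∀ s ∈ S, s * d = d * s) : d = 0 ∨ IsUnit d := by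
  let I : Submodule ℂ 𝒜 :=
    ((Subalgebra.toSubmodule S.toSubalgebra).map (LinearMap.mulLeft ℂ d)).topologicalClosure
  have mem_I {s : 𝒜} (hs : s ∈ S) : d * s ∈ I := subset_closure ⟨s, hs, rfl⟩
  have hIS : (I : Set 𝒜) ⊆ S := closure_minimal
    (Set.image_subset_iff.2 fun s hs => mul_mem hd hs) hclosed
  have hideal (x : 𝒜) (hx : x ∈ I) (s : 𝒜) (hs : s ∈ S) : x * s ∈ I ∧ s * x ∈ I := by
    constructor
    · refine map_mem_closure (f := fun x => x * s) (continuous_mul_const s) hx ?_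
      rintro _ ⟨s', hs', rfl⟩
      exact ⟨s' * s, S.mul_mem hs' hs, (mul_assoc _ _ _).symm⟩
    · refine map_mem_closure (f := fun x => s * x) (continuous_const_mul s) hx ?_
      rintro _ ⟨s', hs', rfl⟩
      refine ⟨s * s', S.mul_mem hs hs', ?_⟩
      simp only [LinearMap.mulLeft_apply, ← mul_assoc, hcomm s hs]
  refine (hS I hIS isClosed_closure I.zero_mem (fun x hx y hy => I.add_mem hx hy) hideal).imp
    (fun hI => ?_) fun hI => ?_
  · simpa only [mul_one, Set.mem_singleton_iff] using hI.subset (mem_I (one_mem S))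
  · have hone : (1 : 𝒜) ∈ I := hI.superset (one_mem S)
    obtain ⟨_, ⟨s, hs, rfl⟩, hlt⟩ := Metric.mem_closure_iff.1 hone 1 one_pos
    have hunit : IsUnit (d * s) := by
      rw [← sub_sub_cancel 1 (d * s)]
      exact isUnit_one_sub_of_norm_lt_one (by rwa [← dist_eq_norm])
    exact ((Commute.isUnit_mul_iff (hcomm s hs).symm).1 hunit).1

theorem isCentral (hS : IsSimpleCStar (S : Set 𝒜)) (hclosed : IsClosed (S : Set 𝒜)) :
    Algebra.IsCentral ℂ S where
  out z hz := by
    cases subsingleton_or_nontrivial 𝒜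
    · exact Subsingleton.elim z 0 ▸ zero_mem _
    obtain ⟨t, ht⟩ := spectrum.nonempty (z : 𝒜)
    have hcomm (s : 𝒜) (hs : s ∈ S) :
        s * (algebraMap ℂ 𝒜 t - z) = (algebraMap ℂ 𝒜 t - z) * s := by
      rw [mul_sub, sub_mul, Algebra.commutes,
        show s * (z : 𝒜) = z * s from congrArg Subtype.val (Subalgebra.mem_center_iff.1 hz ⟨s, hs⟩)]
    have hmem := sub_mem (algebraMap_mem S t) z.2
    have hzero := (hS.eq_zero_or_isUnit hclosed hmem hcomm).resolve_right ht
    exact Algebra.mem_bot.2 ⟨t, Subtype.ext (sub_eq_zero.1 hzero)⟩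

theorem isCentral_of_univ (h : IsSimpleCStar (Set.univ : Set 𝒜)) : Algebra.IsCentral ℂ 𝒜 where
  out z hz := by
    have : Algebra.IsCentral ℂ (⊤ : StarSubalgebra ℂ 𝒜) := isCentral h isClosed_univ
    obtain ⟨t, rfl⟩ := exists_eq_smul_one_of_isCentral (⊤ : StarSubalgebra ℂ 𝒜) trivial
      fun s _ => Subalgebra.mem_center_iff.1 hz s
    exact Algebra.mem_bot.2 ⟨t, Algebra.algebraMap_eq_smul_one t⟩

end IsSimpleCStar

local notation "Ad" => Unitary.conjStarAlgAut ℂ _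

/-- The normalizer of `B`, as a subgroup of the unitary group. -/
def unitaryNormalizer (B : StarSubalgebra ℂ 𝒜) : Subgroup (unitary 𝒜) where
  carrier := {u | ∀ x : 𝒜, Ad u x ∈ B ↔ x ∈ B}
  one_mem' x := by simp
  mul_mem' {u v} hu hv x := by rw [Unitary.conjStarAlgAut_mul_apply, hu, hv]
  inv_mem' {u} hu x := by
    rw [← hu, ← Unitary.conjStarAlgAut_mul_apply, mul_inv_cancel, _root_.map_one,
      StarAlgEquiv.one_apply]

lemma mem_unitaryNormalizer_iff_coe_mem {u : unitary 𝒜} :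
    u ∈ unitaryNormalizer B ↔ (u : 𝒜) ∈ normalizer (B : Set 𝒜) := by
  constructor
  · refine fun hu => ⟨u.2, Set.Subset.antisymm ?_ fun b hb => ?_⟩
    · exact Set.image_subset_iff.2 fun b hb => (hu b).2 hb
    · obtain ⟨x, rfl⟩ := EquivLike.surjective (Ad u) b
      exact ⟨x, (hu x).1 hb, rfl⟩
  · rintro ⟨_, hB⟩ x
    rw [← SetLike.mem_coe, ← hB]
    exact ((Ad u).injective.mem_set_image (s := (B : Set 𝒜)))

lemma conj_mem_commutant_iff {u : unitary 𝒜} (hu : u ∈ unitaryNormalizer B) {c : 𝒜} :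
    Ad u c ∈ commutant B ↔ c ∈ commutant B := by
  rw [mem_commutant, mem_commutant, (EquivLike.surjective (Ad u)).forall]
  refine forall_congr' fun b => ?_
  rw [hu, ← map_mul, ← map_mul, (EquivLike.injective (Ad u)).eq_iff]

lemma trace_mulLeft_algEquiv {R S T : Type*} [CommRing R] [Ring S] [Ring T] [Algebra R S]
    [Algebra R T] (e : S ≃ₐ[R] T) (x : S) :
    LinearMap.trace R T (LinearMap.mulLeft R (e x)) =
      LinearMap.trace R S (LinearMap.mulLeft R x) := by
  rw [← LinearMap.trace_conj' _ e.toLinearEquiv]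
  congr 1
  ext y
  simp [LinearEquiv.conj_apply]

/-- A conditional expectation whose restriction to the relative commutant is a trace that is
invariant under conjugation by the normalizer. -/
structure IsTracialCondExp (B : StarSubalgebra ℂ 𝒜) (E : 𝒜 →ₗ[ℂ] 𝒜) : Prop where
  isCondExp : IsCondExp (B : Set 𝒜) E
  map_mul_comm : ∀ c ∈ commutant B, ∀ d ∈ commutant B, E (c * d) = E (d * c)
  map_conj : ∀ u ∈ unitaryNormalizer B, ∀ c ∈ commutant B, E (Ad u c) = E c

/-- The average of the maps `x ↦ E (star (f i) * x * f i)`. -/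
noncomputable def average (E : 𝒜 →ₗ[ℂ] 𝒜) (f : ι → 𝒜) : 𝒜 →ₗ[ℂ] 𝒜 :=
  (Fintype.card ι : ℂ)⁻¹ • ∑ i, E ∘ₗ LinearMap.mulLeftRight ℂ (star (f i), f i)

lemma average_apply (f : ι → 𝒜) (x : 𝒜) :
    average E f x = (Fintype.card ι : ℂ)⁻¹ • ∑ i, E (star (f i) * x * f i) := by
  simp only [average, LinearMap.smul_apply, LinearMap.sum_apply, LinearMap.comp_apply,
    LinearMap.mulLeftRight_apply]

theorem IsCondExp.average [Nonempty ι] (h : IsCondExp (B : Set 𝒜) E) {f : ι → 𝒜}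
    (hf : ∀ i, f i ∈ commutant B) (hunit : ∀ i, E (star (f i) * f i) = 1) :
    IsCondExp (B : Set 𝒜) (average E f) := by
  have hcard : (Fintype.card ι : ℂ) ≠ 0 := Nat.cast_ne_zero.2 Fintype.card_ne_zero
  have comm_left (i : ι) {b : 𝒜} (hb : b ∈ B) (x : 𝒜) :
      star (f i) * (b * x) = b * (star (f i) * x) := by
    rw [← mul_assoc, ← mem_commutant.1 (star_mem (hf i)) b hb, mul_assoc]
  refine ⟨fun x => ?_, fun b hb => ?_, fun x => ?_, fun b hb b' hb' x => ?_⟩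
  · rw [average_apply]
    exact SMulMemClass.smul_mem _ (sum_mem fun i _ => h.1 _)
  · simp only [average_apply, mul_assoc, mem_commutant.1 (hf _) b hb]
    simp only [← mul_assoc, h.map_mul_right hb, hunit, one_mul, Finset.sum_const, Finset.card_univ,
      ← Nat.cast_smul_eq_nsmul ℂ, smul_smul, inv_mul_cancel₀ hcard, one_smul]
  · refine CStarAlgebra.nonneg_iff_eq_star_mul_self.1 ?_
    rw [average_apply]
    refine smul_nonneg (inv_nonneg.2 (Nat.cast_nonneg _))
      (Finset.sum_nonneg fun i _ => h.map_nonneg ?_)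
    rw [← mul_assoc, mul_assoc, ← star_mul]
    exact star_mul_self_nonneg _
  · simp only [average_apply, mul_assoc, comm_left _ hb, mem_commutant.1 (hf _) b' hb',
      h.map_mul_left hb, smul_mul_assoc, mul_smul_comm, Finset.mul_sum, Finset.sum_mul]
    simp only [← mul_assoc, h.map_mul_right hb']

theorem average_eq_trace_smul_one (f : Module.Basis ι ℂ (commutant B)) [DecidableEq ι]
    (hf : IsOrthonormal E fun i => (f i : 𝒜)) (c : commutant B) :
    average E (fun i => (f i : 𝒜)) c =
      ((Fintype.card ι : ℂ)⁻¹ * LinearMap.trace ℂ _ (LinearMap.mulLeft ℂ c)) • 1 := by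
  have coeff (j : ι) : E (star (f j : 𝒜) * c * f j) = f.repr (c * f j) j • 1 := by
    have expand : (c * f j : 𝒜) = ∑ i, f.repr (c * f j) i • (f i : 𝒜) := by
      conv_lhs => rw [← MulMemClass.coe_mul, ← f.sum_repr (c * f j)]
      exact map_sum (commutant B).subtype _ _
    rw [mul_assoc, expand]
    simp only [Finset.mul_sum, mul_smul_comm, map_sum, map_smul, hf j _, smul_ite, smul_zero,
      Finset.sum_ite_eq, Finset.mem_univ, if_true]
  rw [average_apply, mul_smul, LinearMap.trace_eq_matrix_trace ℂ f, Matrix.trace, Finset.sum_smul,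
    Finset.sum_congr rfl fun j _ => coeff j]
  simp only [Matrix.diag_apply, LinearMap.toMatrix_apply, LinearMap.mulLeft_apply]

/-- Conjugation by a normalizing unitary, as an automorphism of the relative commutant. -/
noncomputable def commutantConj {u : unitary 𝒜} (hu : u ∈ unitaryNormalizer B) :
    commutant B ≃ₐ[ℂ] commutant B :=
  ((Ad u).toAlgEquiv.subalgebraMap (commutant B).toSubalgebra).trans <|
    Subalgebra.equivOfEq _ _ <| by
      ext x
      obtain ⟨x, rfl⟩ := EquivLike.surjective (Ad u) x
      rw [Subalgebra.mem_map]
      refine Iff.trans ?_ (conj_mem_commutant_iff hu).symm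
      exact ⟨fun ⟨y, hy, hyx⟩ => (Ad u).injective hyx ▸ hy, fun hx => ⟨x, hx, rfl⟩⟩

theorem exists_isTracialCondExp [Nontrivial 𝒜] [Algebra.IsCentral ℂ B]
    (h : IsCondExp (B : Set 𝒜) E) {l : κ → 𝒜} (hl : IsQuasiBasis E l) :
    ∃ E₁ : 𝒜 →ₗ[ℂ] 𝒜, IsTracialCondExp B E₁ := by
  have := hl.finiteDimensional_commutant h
  obtain ⟨f, hf⟩ : ∃ f : Module.Basis (Fin (Module.finrank ℂ (commutant B))) ℂ (commutant B),
      IsOrthonormal E fun i => (f i : 𝒜) :=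
    hl.exists_orthonormal_basis h (Subalgebra.toSubmodule (commutant B).toSubalgebra) fun _ => id
  have := f.index_nonempty
  have avg (c : 𝒜) (hc : c ∈ commutant B) := average_eq_trace_smul_one f hf ⟨c, hc⟩
  refine ⟨average E fun i => (f i : 𝒜), h.average (fun i => (f i).2) fun i => ?_,
    fun c hc d hd => ?_, fun u hu c hc => ?_⟩
  · rw [hf i i, if_pos rfl]
  · rw [avg _ (mul_mem hc hd), avg _ (mul_mem hd hc)]
    congr 2
    have hmul := LinearMap.trace_mul_comm ℂ (LinearMap.mulLeft ℂ (⟨c, hc⟩ : commutant B))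
      (LinearMap.mulLeft ℂ ⟨d, hd⟩)
    rwa [Module.End.mul_eq_comp, Module.End.mul_eq_comp, ← LinearMap.mulLeft_mul,
      ← LinearMap.mulLeft_mul] at hmul
  · rw [avg _ ((conj_mem_commutant_iff hu).2 hc), avg c hc]
    congr 2
    exact trace_mulLeft_algEquiv (commutantConj hu) ⟨c, hc⟩

theorem exists_minimal_isStarProjection (k : Type*) {R : Type*} [Field k] [IsAlgClosed k]
    [StarRing k] [Ring R] [Nontrivial R] [StarRing R] [Algebra k R] [StarModule k R]
    [FiniteDimensional k R] (hproper : ∀ x : R, star x * x = 0 → x = 0) :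
    ∃ p : R, IsStarProjection p ∧ p ≠ 0 ∧ ∀ c, ∃ t : k, p * c * p = t • p := by
  have := IsArtinianRing.of_finite k R
  obtain ⟨I, hI, -⟩ := (eq_bot_or_exists_atom_le (⊤ : Submodule R R)).resolve_left top_ne_bot
  have := isSimpleModule_iff_isAtom.2 hI
  -- Schur's lemma, applied to right multiplication by `b` on the simple left ideal `I`.
  have mul_right_scalar (b : R) (hb : b ∈ I) : ∃ t : k, ∀ x ∈ I, x * b = t • x := by
    obtain ⟨t, ht⟩ := (IsSimpleModule.algebraMap_end_bijective_of_isAlgClosed k (A := R)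
      (V := I)).2 (((LinearMap.mulRight R b).domRestrict I).codRestrict I fun x => I.smul_mem x hb)
    refine ⟨t, fun x hx => ?_⟩
    exact (congrArg Subtype.val (LinearMap.congr_fun ht ⟨x, hx⟩)).symm
  obtain ⟨x, hx, hx₀⟩ := Submodule.exists_mem_ne_zero_of_ne_bot hI.1
  have ha : star x * x ∈ I := I.smul_mem (star x) hx
  have ha₀ : star x * x ≠ 0 := fun h => hx₀ (hproper x h)
  have hsa : IsSelfAdjoint (star x * x) := IsSelfAdjoint.star_mul_self x
  generalize star x * x = a at ha ha₀ hsa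
  obtain ⟨t, ht⟩ := mul_right_scalar a ha
  have ht₀ : t ≠ 0 := fun h => ha₀ (hproper a (by rw [hsa.star_eq, ht a ha, h, zero_smul]))
  have hreal : star t = t := by
    refine smul_left_injective k ha₀ ?_
    have hstar := congrArg star (ht a ha)
    rwa [star_mul, star_smul, hsa.star_eq, ht a ha, eq_comm] at hstar
  refine ⟨t⁻¹ • a, ⟨?_, ?_⟩, smul_ne_zero (inv_ne_zero ht₀) ha₀, fun c => ?_⟩
  · rw [IsIdempotentElem, smul_mul_smul_comm, ht a ha, mul_smul, inv_smul_smul₀ ht₀]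
  · rw [IsSelfAdjoint, star_smul, star_inv₀, hreal, hsa.star_eq]
  · obtain ⟨s, hs⟩ := mul_right_scalar _ (I.smul_mem c (I.smul_of_tower_mem t⁻¹ ha))
    exact ⟨s, by rw [mul_assoc]; exact hs _ (I.smul_of_tower_mem t⁻¹ ha)⟩

/-- A system `g` of nonzero matrix units in `S` that spans the central summand `S * ∑ i, g i i`. -/
structure IsMatrixBlock [DecidableEq ι] (S : StarSubalgebra ℂ 𝒜) (g : ι → ι → 𝒜) : Prop where
  mem : ∀ i j, g i j ∈ S
  star_eq : ∀ i j, star (g i j) = g j i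
  mul_eq : ∀ i j k l, g i j * g k l = if j = k then g i l else 0
  support_ne_zero : ∑ i, g i i ≠ 0
  support_comm : ∀ c ∈ S, c * ∑ i, g i i = (∑ i, g i i) * c
  exists_mul_support_eq : ∀ c ∈ S, ∃ t : ι → ι → ℂ, c * ∑ i, g i i = ∑ i, ∑ j, t i j • g i j

/-- The block is the algebra of compact operators of the left ideal `S * p`, with orthonormal
basis `f`. -/
theorem isMatrixBlock_mul_star [DecidableEq ι] [Nonempty ι] {p : 𝒜} (hp₀ : p ≠ 0) {f : ι → 𝒜}
    (hf : ∀ i, f i ∈ S) (hfp : ∀ i, f i * p = f i)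
    (horth : ∀ i j, star (f i) * f j = if i = j then p else 0)
    (hspan : ∀ c ∈ S, ∀ j, ∃ t : ι → ℂ, c * f j = ∑ i, t i • f i) :
    IsMatrixBlock S fun i j => f i * star (f j) := by
  have support_mul (j : ι) : (∑ i, f i * star (f i)) * f j = f j := by
    simp only [Finset.sum_mul, mul_assoc, horth, mul_ite, mul_zero, Finset.sum_ite_eq',
      Finset.mem_univ, if_true, hfp]
  have support_star : star (∑ i, f i * star (f i)) = ∑ i, f i * star (f i) := by
    simp only [star_sum, star_mul, star_star]
  have compress (c : 𝒜) (hc : c ∈ S) :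
      (∑ i, f i * star (f i)) * (c * ∑ j, f j * star (f j)) = c * ∑ j, f j * star (f j) := by
    have fixed (j : ι) : (∑ i, f i * star (f i)) * (c * f j) = c * f j := by
      obtain ⟨t, ht⟩ := hspan c hc j
      rw [ht, Finset.mul_sum]
      simp only [mul_smul_comm, support_mul]
    rw [Finset.mul_sum _ _ c, Finset.mul_sum]
    exact Finset.sum_congr rfl fun j _ => by rw [← mul_assoc c, ← mul_assoc, fixed]
  refine ⟨fun i j => mul_mem (hf i) (star_mem (hf j)), fun i j => ?_, fun i j k l => ?_,
    fun h => ?_, fun c hc => ?_, fun c hc => ?_⟩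
  · rw [star_mul, star_star]
  · rw [mul_assoc, ← mul_assoc (star (f j)), horth, ite_mul, mul_ite, zero_mul, mul_zero,
      ← mul_assoc, hfp]
  · obtain ⟨i⟩ := ‹Nonempty ι›
    have : f i = 0 := by rw [← support_mul i, h, zero_mul]
    exact hp₀ (by simpa [this] using (horth i i).symm)
  · have hstar := congrArg star (compress (star c) (star_mem hc))
    simp only [star_mul, support_star, star_star] at hstar
    rw [← compress c hc, ← mul_assoc, hstar]
  · choose t ht using hspan c hc
    refine ⟨fun i j => t j i, ?_⟩
    simp only [Finset.mul_sum, ← mul_assoc, ht, Finset.sum_mul, smul_mul_assoc]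
    exact Finset.sum_comm

theorem exists_isMatrixBlock [Nontrivial 𝒜] (S : StarSubalgebra ℂ 𝒜) [FiniteDimensional ℂ S] :
    ∃ (n : ℕ) (g : Fin n → Fin n → 𝒜), IsMatrixBlock S g := by
  obtain ⟨⟨p, hpS⟩, hp, hp₀, hmin⟩ := exists_minimal_isStarProjection ℂ (R := S) fun x hx =>
    Subtype.ext ((CStarRing.star_mul_self_eq_zero_iff _).1 (congrArg Subtype.val hx))
  replace hp : IsStarProjection p := hp.map S.subtype
  replace hp₀ : p ≠ 0 := fun h => hp₀ (Subtype.ext h)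
  let V := (Subalgebra.toSubmodule S.toSubalgebra).map (LinearMap.mulRight ℂ p)
  have hV {x : 𝒜} (hx : x ∈ V) : x ∈ S ∧ x * p = x := by
    obtain ⟨c, hc, rfl⟩ := hx
    exact ⟨mul_mem hc hpS, by rw [LinearMap.mulRight_apply, mul_assoc, hp.isIdempotentElem.eq]⟩
  have mul_mem_V {c x : 𝒜} (hc : c ∈ S) (hx : x ∈ V) : c * x ∈ V :=
    ⟨c * x, S.toSubalgebra.mul_mem hc (hV hx).1, by
      rw [LinearMap.mulRight_apply, mul_assoc, (hV hx).2]⟩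
  have : FiniteDimensional ℂ (Subalgebra.toSubmodule S.toSubalgebra) :=
    inferInstanceAs (FiniteDimensional ℂ S)
  have : Nontrivial V :=
    ⟨⟨p, 1, S.one_mem, one_mul p⟩, 0, fun h => hp₀ (congrArg Subtype.val h)⟩
  obtain ⟨f, hf⟩ := exists_basis_map_star_mul_eq_ite (PositiveLinearMap.id ℂ 𝒜) V hp.nonneg hp₀
    (fun x hx y hy => by
      obtain ⟨t, ht⟩ := hmin ⟨star x * y, mul_mem (star_mem (hV hx).1) (hV hy).1⟩
      refine ⟨t, ?_⟩
      rw [PositiveLinearMap.id_apply, ← (hV hx).2, ← (hV hy).2, star_mul,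
        hp.isSelfAdjoint.star_eq]
      simp only [← mul_assoc]
      rw [mul_assoc p]
      exact congrArg Subtype.val ht)
    fun x _ hx => (CStarRing.star_mul_self_eq_zero_iff _).1 hx
  have := f.index_nonempty
  refine ⟨_, _, isMatrixBlock_mul_star hp₀ (fun i => (hV (f i).2).1) (fun i => (hV (f i).2).2)
    hf fun c hc j => ⟨f.repr ⟨c * f j, mul_mem_V hc (f j).2⟩, ?_⟩⟩
  exact (congrArg V.subtype (f.sum_repr ⟨c * f j, mul_mem_V hc (f j).2⟩).symm).trans
    (map_sum V.subtype _ _)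

namespace IsMatrixBlock

variable [DecidableEq ι] [DecidableEq κ] {g : ι → ι → 𝒜} {g' : κ → κ → 𝒜}

lemma support_mem (hg : IsMatrixBlock S g) : ∑ i, g i i ∈ S :=
  sum_mem fun i _ => hg.mem i i

lemma support_mul (hg : IsMatrixBlock S g) (j k : ι) : (∑ i, g i i) * g j k = g j k := by
  simp only [Finset.sum_mul, hg.mul_eq, Finset.sum_ite_eq', Finset.mem_univ, if_true]

lemma isIdempotentElem_support (hg : IsMatrixBlock S g) : IsIdempotentElem (∑ i, g i i) := by
  rw [IsIdempotentElem, Finset.mul_sum]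
  exact Finset.sum_congr rfl fun i _ => hg.support_mul i i

lemma exists_mul_support_eq_smul (hg : IsMatrixBlock S g) {d : 𝒜} (hd : d ∈ S)
    (hcomm : ∀ c ∈ S, c * d = d * c) : ∃ t : ℂ, d * ∑ i, g i i = t • ∑ i, g i i := by
  obtain ⟨o, -, -⟩ := Finset.exists_ne_zero_of_sum_ne_zero hg.support_ne_zero
  obtain ⟨t, ht⟩ := hg.exists_mul_support_eq d hd
  have conj_eq (i : ι) : d * g i i = t o o • g i i := calc
    d * g i i = g i o * (d * ∑ i, g i i) * g o i := by
      rw [mul_assoc, mul_assoc, hg.support_mul, ← mul_assoc, hcomm _ (hg.mem i o), mul_assoc,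
        hg.mul_eq, if_pos rfl]
    _ = t o o • g i i := by
      simp only [ht, Finset.mul_sum, Finset.sum_mul, mul_smul_comm, smul_mul_assoc, hg.mul_eq,
        smul_ite, smul_zero, Finset.sum_ite_eq, Finset.mem_univ, if_true,
        Finset.sum_ite_irrel, Finset.sum_const_zero, Finset.sum_ite_eq']
  refine ⟨t o o, ?_⟩
  rw [Finset.mul_sum, Finset.smul_sum]
  exact Finset.sum_congr rfl fun i _ => conj_eq i

/-- The supports are minimal central projections. -/
lemma support_eq_or_mul_eq_zero (hg : IsMatrixBlock S g) (hg' : IsMatrixBlock S g') :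
    ∑ i, g i i = ∑ i, g' i i ∨ (∑ i, g i i) * ∑ i, g' i i = 0 := by
  obtain ⟨s, hs⟩ := hg'.exists_mul_support_eq_smul hg.support_mem hg.support_comm
  obtain ⟨t, ht⟩ := hg.exists_mul_support_eq_smul hg'.support_mem hg'.support_comm
  have hcomm := hg'.support_comm _ hg.support_mem
  have hz := hg.isIdempotentElem_support.eq
  have hz' := hg'.isIdempotentElem_support.eq
  generalize ∑ i, g i i = z at *
  generalize ∑ i, g' i i = z' at *
  rw [← hcomm] at ht
  refine or_iff_not_imp_right.2 fun hne => ?_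
  have hs₁ : s = 1 := smul_left_injective ℂ hne <| by
    simp only
    rw [one_smul, ← mul_smul_comm, ← hs, ← mul_assoc, hz]
  have ht₁ : t = 1 := smul_left_injective ℂ hne <| by
    simp only
    rw [one_smul, ← smul_mul_assoc, ← ht, mul_assoc, hz']
  rw [← one_smul ℂ z, ← ht₁, ← ht, hs, hs₁, one_smul]

lemma map (hg : IsMatrixBlock S g) (e : 𝒜 ≃⋆ₐ[ℂ] 𝒜) (he : ∀ x, e x ∈ S ↔ x ∈ S) :
    IsMatrixBlock S fun i j => e (g i j) where
  mem i j := (he _).2 (hg.mem i j)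
  star_eq i j := by rw [← map_star, hg.star_eq]
  mul_eq i j k l := by rw [← map_mul, hg.mul_eq, apply_ite e, map_zero]
  support_ne_zero := by
    rw [← map_sum]
    exact (map_ne_zero_iff e (EquivLike.injective e)).2 hg.support_ne_zero
  support_comm c hc := by
    obtain ⟨c, rfl⟩ := EquivLike.surjective e c
    rw [← map_sum, ← map_mul, ← map_mul, hg.support_comm c ((he c).1 hc)]
  exists_mul_support_eq c hc := by
    obtain ⟨c, rfl⟩ := EquivLike.surjective e c
    obtain ⟨t, ht⟩ := hg.exists_mul_support_eq c ((he c).1 hc)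
    refine ⟨t, ?_⟩
    rw [← map_sum, ← map_mul, ht]
    simp only [map_sum, map_smul]

end IsMatrixBlock

theorem linearIndependent_of_orthogonalIdempotents {k R : Type*} [Field k] [Ring R] [Algebra k R]
    {I : Type*} {e : I → R} (he : OrthogonalIdempotents e) (hne : ∀ i, e i ≠ 0) :
    LinearIndependent k e := by
  classical
  refine linearIndependent_iff'.2 fun s c hc i hi => ?_
  have := congrArg (· * e i) hc
  simp only [Finset.sum_mul, smul_mul_assoc, he.mul_eq, smul_ite, smul_zero, zero_mul,
    Finset.sum_ite_eq', hi, if_true] at this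
  exact (smul_eq_zero.1 this).resolve_right (hne i)

/-- A system `e` of matrix units with sum `1` spanning `S`, which identifies `S` with the direct
sum over `s : κ` of copies of the algebra of `ι × ι` matrices. -/
structure IsMatrixUnits [DecidableEq ι] [DecidableEq κ] (S : StarSubalgebra ℂ 𝒜)
    (e : κ → ι → ι → 𝒜) : Prop where
  mem : ∀ s i j, e s i j ∈ S
  star_eq : ∀ s i j, star (e s i j) = e s j i
  mul_eq : ∀ s i j s' k l, e s i j * e s' k l = if s = s' ∧ j = k then e s i l else 0
  sum_one : ∑ s, ∑ i, e s i i = 1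
  span : ∀ c ∈ S, ∃ t : κ → ι → ι → ℂ, c = ∑ s, ∑ i, ∑ j, t s i j • e s i j

theorem isMatrixUnits_of_isMatrixBlock [DecidableEq ι] [DecidableEq κ] {e : κ → ι → ι → 𝒜}
    (he : ∀ s, IsMatrixBlock S (e s))
    (horth : ∀ s s', s ≠ s' → (∑ i, e s i i) * ∑ i, e s' i i = 0)
    (hsum : ∑ s, ∑ i, e s i i = 1) : IsMatrixUnits S e where
  mem s := (he s).mem
  star_eq s := (he s).star_eq
  mul_eq s i j s' k l := by
    split_ifs with h
    · obtain ⟨rfl, rfl⟩ := h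
      rw [(he s).mul_eq, if_pos rfl]
    · obtain rfl | hne := eq_or_ne s s'
      · rw [(he s).mul_eq, if_neg fun hj => h ⟨rfl, hj⟩]
      · rw [← (he s).support_mul i j, ← (he s').support_mul k l,
          ← (he s).support_comm _ ((he s).mem i j), mul_assoc, ← mul_assoc (∑ i, e s i i),
          horth s s' hne, zero_mul, mul_zero]
  sum_one := hsum
  span c hc := by
    choose t ht using fun s => (he s).exists_mul_support_eq c hc
    refine ⟨t, ?_⟩
    rw [← Finset.sum_congr rfl fun s _ => ht s, ← Finset.mul_sum, hsum, mul_one]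

section Orbit

variable [DecidableEq ι] {g : ι → ι → 𝒜} {Γ : Subgroup (unitary 𝒜)}

/-- The orbit of the support of a block under conjugation by `Γ`. -/
def supportOrbit (Γ : Subgroup (unitary 𝒜)) (g : ι → ι → 𝒜) : Set 𝒜 :=
  Set.range fun u : Γ => Ad u.1 (∑ i, g i i)

lemma IsMatrixBlock.conj (hg : IsMatrixBlock S g) (hΓ : Γ ≤ unitaryNormalizer S) {u : unitary 𝒜}
    (hu : u ∈ Γ) : IsMatrixBlock S fun i j => Ad u (g i j) :=
  hg.map (Ad u) (hΓ hu)

lemma orthogonalIdempotents_supportOrbit (hg : IsMatrixBlock S g)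
    (hΓ : Γ ≤ unitaryNormalizer S) :
    OrthogonalIdempotents (Subtype.val : supportOrbit Γ g → 𝒜) where
  idem := by
    rintro ⟨-, u, rfl⟩
    simpa only [map_sum] using (hg.conj hΓ u.2).isIdempotentElem_support
  ortho := by
    rintro ⟨-, u, rfl⟩ ⟨-, v, rfl⟩ hne
    simp only [map_sum] at hne ⊢
    exact ((hg.conj hΓ u.2).support_eq_or_mul_eq_zero (hg.conj hΓ v.2)).resolve_left
      fun h => hne (Subtype.ext h)

lemma supportOrbit_subset (hg : IsMatrixBlock S g) (hΓ : Γ ≤ unitaryNormalizer S) :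
    supportOrbit Γ g ⊆ S :=
  Set.range_subset_iff.2 fun u => (hΓ u.2 _).2 hg.support_mem

lemma finite_supportOrbit [FiniteDimensional ℂ S] (hg : IsMatrixBlock S g)
    (hΓ : Γ ≤ unitaryNormalizer S) : Finite (supportOrbit Γ g) := by
  have hindep : LinearIndependent ℂ (Subtype.val : supportOrbit Γ g → 𝒜) := by
    refine linearIndependent_of_orthogonalIdempotents
      (orthogonalIdempotents_supportOrbit hg hΓ) ?_
    rintro ⟨-, u, rfl⟩
    exact (map_ne_zero_iff (Ad u.1) (EquivLike.injective _)).2 hg.support_ne_zero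
  have hindepS : LinearIndependent ℂ (Set.inclusion (supportOrbit_subset hg hΓ)) :=
    .of_comp S.subtype.toLinearMap hindep
  exact hindepS.finite_of_isNoetherian

theorem sum_supportOrbit_eq_one [Fintype (supportOrbit Γ g)] (hg : IsMatrixBlock S g)
    (hΓ : Γ ≤ unitaryNormalizer S)
    (hergodic : ∀ c ∈ S, (∀ u ∈ Γ, Ad u c = c) → ∃ t : ℂ, c = t • 1) :
    ∑ q : supportOrbit Γ g, (q : 𝒜) = 1 := by
  have hinv (u : unitary 𝒜) (hu : u ∈ Γ) :
      Ad u (∑ q : supportOrbit Γ g, (q : 𝒜)) = ∑ q : supportOrbit Γ g, (q : 𝒜) := by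
    have hmaps (q : supportOrbit Γ g) : Ad u (q : 𝒜) ∈ supportOrbit Γ g := by
      obtain ⟨-, v, rfl⟩ := q
      refine ⟨⟨u, hu⟩ * v, ?_⟩
      simp only [Subgroup.coe_mul, Unitary.conjStarAlgAut_mul_apply]
    have hinj : Function.Injective fun q : supportOrbit Γ g => (⟨_, hmaps q⟩ : supportOrbit Γ g) :=
      fun p q h => Subtype.ext (EquivLike.injective (Ad u) (congrArg Subtype.val h))
    rw [map_sum]
    exact (Finite.injective_iff_bijective.1 hinj).sum_comp fun q => (q : 𝒜)
  obtain ⟨t, ht⟩ := hergodic _ (sum_mem fun q _ => supportOrbit_subset hg hΓ q.2) hinv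
  let q₀ : supportOrbit Γ g := ⟨∑ i, g i i, 1, by simp only [Subgroup.coe_one, map_one]; rfl⟩
  have hq₀ := (orthogonalIdempotents_supportOrbit hg hΓ).mul_sum_of_mem (Finset.mem_univ q₀)
  rw [ht, mul_smul_comm, mul_one] at hq₀
  rw [ht, smul_left_injective ℂ hg.support_ne_zero (hq₀.trans (one_smul ℂ _).symm), one_smul]

theorem exists_isMatrixUnits [FiniteDimensional ℂ S] (hg : IsMatrixBlock S g)
    (hΓ : Γ ≤ unitaryNormalizer S)
    (hergodic : ∀ c ∈ S, (∀ u ∈ Γ, Ad u c = c) → ∃ t : ℂ, c = t • 1) :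
    ∃ (n : ℕ) (u : Fin n → unitary 𝒜), (∀ s, u s ∈ Γ) ∧
      IsMatrixUnits S fun s i j => Ad (u s) (g i j) := by
  have := finite_supportOrbit hg hΓ
  let _ := Fintype.ofFinite (supportOrbit Γ g)
  choose u hu using fun q : supportOrbit Γ g => q.2
  let φ := (Fintype.equivFin (supportOrbit Γ g)).symm
  have support_eq (s) : ∑ i, Ad (u (φ s)).1 (g i i) = φ s := by rw [← map_sum, ← hu]
  refine ⟨_, fun s => u (φ s), fun s => (u (φ s)).2, isMatrixUnits_of_isMatrixBlock
    (fun s => hg.conj hΓ (u (φ s)).2) (fun s s' hne => ?_) ?_⟩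
  · rw [support_eq, support_eq]
    exact (orthogonalIdempotents_supportOrbit hg hΓ).ortho (φ.injective.ne hne)
  · simp only [support_eq]
    rw [φ.sum_comp fun q => (q : 𝒜), sum_supportOrbit_eq_one hg hΓ hergodic]

end Orbit

theorem IsTracialCondExp.map_matrixUnit [DecidableEq ι] [DecidableEq κ]
    (h : IsTracialCondExp B E) {e : κ → ι → ι → 𝒜} (he : IsMatrixUnits (commutant B) e)
    (hblock : ∀ s s' i, E (e s i i) = E (e s' i i)) (s : κ) (i j : ι) :
    E (e s i j) = if i = j then (Fintype.card (κ × ι) : ℂ)⁻¹ • 1 else 0 := by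
  have diag (k : ι) : E (e s i i) = E (e s k k) := by
    have hcomm := h.map_mul_comm _ (he.mem s i k) _ (he.mem s k i)
    simpa only [he.mul_eq, and_self, if_true] using hcomm
  split_ifs with hij
  · subst hij
    have hsum : ∑ p : κ × ι, E (e p.1 p.2 p.2) = 1 := by
      rw [Fintype.sum_prod_type]
      simp only [← map_sum, he.sum_one, h.isCondExp.map_one]
    simp only [hblock _ s, ← diag, Finset.sum_const, Finset.card_univ,
      ← Nat.cast_smul_eq_nsmul ℂ] at hsum
    have hcard : (Fintype.card (κ × ι) : ℂ) ≠ 0 :=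
      Nat.cast_ne_zero.2 (@Fintype.card_ne_zero _ _ ⟨(s, i)⟩)
    rw [← hsum, inv_smul_smul₀ hcard]
  · have hcomm := h.map_mul_comm _ (he.mem s i i) _ (he.mem s i j)
    simpa only [he.mul_eq, true_and, if_true, if_neg (Ne.symm hij), map_zero] using hcomm

/-- A basis of `S` consisting of unitaries which is orthonormal for `E`. -/
structure IsUnitaryBasis [DecidableEq ι] (S : StarSubalgebra ℂ 𝒜) (E : 𝒜 →ₗ[ℂ] 𝒜) (w : ι → 𝒜) :
    Prop where
  mem : ∀ i, w i ∈ S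
  mem_unitary : ∀ i, w i ∈ unitary 𝒜
  orthonormal : IsOrthonormal E w
  span : ∀ c ∈ S, ∃ t : ι → ℂ, c = ∑ i, t i • w i

lemma star_addChar_mul_self {G : Type*} [AddCommGroup G] [Finite G] (χ : AddChar G ℂ) (x : G) :
    star (χ x) * χ x = 1 := by
  rw [RCLike.star_def, RCLike.conj_mul, AddChar.norm_apply, RCLike.ofReal_one, one_pow]

lemma sum_star_addChar_mul {G : Type*} [AddCommGroup G] [Fintype G] (χ ψ : AddChar G ℂ) :
    ∑ x, star (χ x) * ψ x = if χ = ψ then (Fintype.card G : ℂ) else 0 := by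
  classical
  calc ∑ x, star (χ x) * ψ x = ∑ x, (ψ - χ) x := Finset.sum_congr rfl fun x _ => by
        rw [AddChar.sub_apply, AddChar.map_neg_eq_conj, RCLike.star_def, mul_comm]
    _ = _ := by simp only [AddChar.sum_eq_ite, sub_eq_zero, eq_comm (a := χ)]

section Weyl

variable [AddCommGroup ι] [AddCommGroup κ] {e : κ → ι → ι → 𝒜}

/-- The Weyl operators of a system of matrix units: `α.1` acts by translation inside each block
and `α.2` by modulation. -/
noncomputable def weyl (e : κ → ι → ι → 𝒜) (α : ι × AddChar (κ × ι) ℂ) : 𝒜 :=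
  ∑ p : κ × ι, α.2 p • e p.1 (p.2 + α.1) p.2

lemma sum_addChar_smul_weyl (s : κ) (i j : ι) :
    ∑ χ : AddChar (κ × ι) ℂ, χ (-(s, j)) • weyl e (i - j, χ) =
      (Fintype.card (κ × ι) : ℂ) • e s i j := by
  classical
  simp only [weyl, Finset.smul_sum, smul_smul]
  rw [Finset.sum_comm]
  simp only [← Finset.sum_smul, ← AddChar.map_add_eq_mul, AddChar.sum_apply_eq_ite]
  rw [Fintype.sum_eq_single (s, j) fun p hp => ?_]
  · rw [if_pos (neg_add_cancel _), add_sub_cancel]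
  · rw [if_neg fun h => hp (neg_add_eq_zero.1 h).symm, zero_smul]

variable [DecidableEq ι] [DecidableEq κ]

lemma IsMatrixUnits.star_weyl (he : IsMatrixUnits S e) (α : ι × AddChar (κ × ι) ℂ) :
    star (weyl e α) = ∑ p : κ × ι, star (α.2 p) • e p.1 p.2 (p.2 + α.1) := by
  simp only [weyl, star_sum, star_smul, he.star_eq]

lemma IsMatrixUnits.star_weyl_mul_weyl (he : IsMatrixUnits S e) (α β : ι × AddChar (κ × ι) ℂ) :
    star (weyl e α) * weyl e β = ∑ p : κ × ι,
      (star (α.2 p) * β.2 (p.1, p.2 + α.1 - β.1)) • e p.1 p.2 (p.2 + α.1 - β.1) := by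
  rw [he.star_weyl, weyl, Finset.sum_mul]
  refine Finset.sum_congr rfl fun p _ => ?_
  rw [Finset.mul_sum, Fintype.sum_eq_single (p.1, p.2 + α.1 - β.1) fun q hq => ?_]
  · rw [smul_mul_smul_comm, he.mul_eq, if_pos ⟨rfl, (sub_add_cancel _ _).symm⟩]
  · rw [smul_mul_smul_comm, he.mul_eq, if_neg, smul_zero]
    rintro ⟨h₁, h₂⟩
    exact hq (Prod.ext h₁.symm (eq_sub_of_add_eq h₂.symm))

lemma IsMatrixUnits.weyl_mul_star_weyl (he : IsMatrixUnits S e) (α : ι × AddChar (κ × ι) ℂ) :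
    weyl e α * star (weyl e α) = 1 := by
  have term (p : κ × ι) : α.2 p • e p.1 (p.2 + α.1) p.2 * star (weyl e α) =
      e p.1 (p.2 + α.1) (p.2 + α.1) := by
    rw [he.star_weyl, Finset.mul_sum, Fintype.sum_eq_single p fun q hq => ?_]
    · rw [smul_mul_smul_comm, he.mul_eq, if_pos ⟨rfl, rfl⟩, mul_comm, star_addChar_mul_self,
        one_smul]
    · rw [smul_mul_smul_comm, he.mul_eq, if_neg, smul_zero]
      rintro ⟨h₁, h₂⟩
      exact hq (Prod.ext h₁.symm h₂.symm)
  rw [← he.sum_one]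
  nth_rw 1 [weyl]
  rw [Finset.sum_mul, Finset.sum_congr rfl fun p _ => term p, Fintype.sum_prod_type]
  exact Finset.sum_congr rfl fun s _ => Equiv.sum_comp (Equiv.addRight α.1) fun i => e s i i

lemma IsMatrixUnits.weyl_mem_unitary (he : IsMatrixUnits S e) (α : ι × AddChar (κ × ι) ℂ) :
    weyl e α ∈ unitary 𝒜 := by
  refine Unitary.mem_iff.2 ⟨?_, he.weyl_mul_star_weyl α⟩
  simp only [he.star_weyl_mul_weyl, add_sub_cancel_right, Prod.mk.eta, star_addChar_mul_self,
    one_smul]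
  rw [Fintype.sum_prod_type, he.sum_one]

theorem isOrthonormal_weyl (he : IsMatrixUnits S e)
    (hE : ∀ s i j, E (e s i j) = if i = j then (Fintype.card (κ × ι) : ℂ)⁻¹ • 1 else 0) :
    IsOrthonormal E (weyl e) := by
  rintro ⟨a, χ⟩ ⟨b, ψ⟩
  have hcard : (Fintype.card (κ × ι) : ℂ) ≠ 0 := Nat.cast_ne_zero.2 Fintype.card_ne_zero
  simp only [he.star_weyl_mul_weyl, map_sum, map_smul, hE, add_sub_assoc, left_eq_add, sub_eq_zero]
  by_cases hab : a = b
  · subst hab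
    simp only [sub_self, add_zero, if_true, smul_smul, ← Finset.sum_smul, ← Finset.sum_mul,
      sum_star_addChar_mul, Prod.mk.injEq, true_and]
    rw [ite_mul, zero_mul, mul_inv_cancel₀ hcard, ite_smul, one_smul, zero_smul]
  · simp only [hab, if_false, smul_zero, Finset.sum_const_zero, Prod.mk.injEq, false_and]

theorem isUnitaryBasis_weyl (he : IsMatrixUnits S e)
    (hE : ∀ s i j, E (e s i j) = if i = j then (Fintype.card (κ × ι) : ℂ)⁻¹ • 1 else 0) :
    IsUnitaryBasis S E (weyl e) where
  mem α := sum_mem fun p _ => SMulMemClass.smul_mem _ (he.mem _ _ _)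
  mem_unitary := he.weyl_mem_unitary
  orthonormal := isOrthonormal_weyl he hE
  span c hc := by
    obtain ⟨t, rfl⟩ := he.span c hc
    suffices h : ∑ s, ∑ i, ∑ j, t s i j • e s i j ∈ Submodule.span ℂ (Set.range (weyl e)) by
      obtain ⟨a, ha⟩ := (Submodule.mem_span_range_iff_exists_fun ℂ).1 h
      exact ⟨a, ha.symm⟩
    refine sum_mem fun s _ => sum_mem fun i _ => sum_mem fun j _ => Submodule.smul_mem _ _ ?_
    have hcard : (Fintype.card (κ × ι) : ℂ) ≠ 0 := Nat.cast_ne_zero.2 Fintype.card_ne_zero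
    rw [← Submodule.smul_mem_iff _ hcard, ← sum_addChar_smul_weyl]
    exact sum_mem fun χ _ => Submodule.smul_mem _ _ (Submodule.subset_span ⟨_, rfl⟩)

end Weyl

lemma conjStarAlgAut_mul_coe (u : unitary 𝒜) (x : 𝒜) : Ad u x * u = u * x := by
  rw [Unitary.conjStarAlgAut_apply, mul_assoc, Unitary.coe_star_mul_self, mul_one]

theorem IsRegular.mem_of_normalizer_subset (hreg : IsRegular (B : Set 𝒜)) {V : Submodule ℂ 𝒜}
    (hV : IsClosed (V : Set 𝒜)) (h : ∀ u ∈ unitaryNormalizer B, (u : 𝒜) ∈ V) (x : 𝒜) : x ∈ V := by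
  let N := (unitaryNormalizer B).toSubmonoid.map (unitary 𝒜).subtype
  have hN : normalizer (B : Set 𝒜) ⊆ N := fun u hu =>
    ⟨⟨u, hu.1⟩, mem_unitaryNormalizer_iff_coe_mem.2 hu, rfl⟩
  have hstar : star (normalizer (B : Set 𝒜)) ⊆ N := fun u hu => by
    obtain ⟨v, hv, hvu⟩ := hN (Set.mem_star.1 hu)
    exact ⟨v⁻¹, (unitaryNormalizer B).inv_mem hv, star_injective ((star_star _).trans hvu)⟩
  have hspan : (StarAlgebra.adjoin ℂ (normalizer (B : Set 𝒜)) : Set 𝒜) ⊆ V := fun y hy => by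
    replace hy : y ∈ Subalgebra.toSubmodule
      (StarAlgebra.adjoin ℂ (normalizer (B : Set 𝒜))).toSubalgebra := hy
    rw [StarAlgebra.adjoin_eq_span] at hy
    refine Submodule.span_le.2 (fun z hz => ?_) hy
    obtain ⟨u, hu, rfl⟩ := Submonoid.closure_le.2 (Set.union_subset hN hstar) hz
    exact h u hu
  exact closure_minimal hspan hV (hreg ▸ trivial :
    x ∈ (StarAlgebra.adjoin ℂ (normalizer (B : Set 𝒜))).topologicalClosure)

theorem IsRegular.exists_eq_smul_one [Algebra.IsCentral ℂ 𝒜] (hreg : IsRegular (B : Set 𝒜)) {c : 𝒜}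
    (hc : ∀ u ∈ unitaryNormalizer B, Ad u c = c) : ∃ t : ℂ, c = t • 1 := by
  have hcomm : ∀ x, x ∈ (LinearMap.mulLeft ℂ c - LinearMap.mulRight ℂ c).ker := by
    refine hreg.mem_of_normalizer_subset ?_ fun u hu => ?_
    · exact (isClosed_singleton (x := 0)).preimage
        ((continuous_const_mul c).sub (continuous_mul_const c))
    · rw [LinearMap.mem_ker, LinearMap.sub_apply, sub_eq_zero]
      change c * u = u * c
      nth_rw 1 [← hc u hu]
      exact conjStarAlgAut_mul_coe u c
  have hcenter : c ∈ Subalgebra.center ℂ 𝒜 :=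
    Subalgebra.mem_center_iff.2 fun x => (sub_eq_zero.1 (hcomm x)).symm
  obtain ⟨t, rfl⟩ := (Algebra.IsCentral.mem_center_iff ℂ).1 hcenter
  exact ⟨t, Algebra.algebraMap_eq_smul_one t⟩

theorem exists_isTracialCondExp_isUnitaryBasis [Nontrivial 𝒜] [Algebra.IsCentral ℂ 𝒜]
    [Algebra.IsCentral ℂ B] (hreg : IsRegular (B : Set 𝒜)) (h : IsCondExp (B : Set 𝒜) E)
    {l : κ → 𝒜} (hl : IsQuasiBasis E l) :
    ∃ (ι : Type) (_ : Fintype ι) (_ : DecidableEq ι) (E₁ : 𝒜 →ₗ[ℂ] 𝒜) (w : ι → 𝒜),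
      IsTracialCondExp B E₁ ∧ IsUnitaryBasis (commutant B) E₁ w := by
  have := hl.finiteDimensional_commutant h
  obtain ⟨E₁, hE₁⟩ := exists_isTracialCondExp h hl
  obtain ⟨n, g, hg⟩ := exists_isMatrixBlock (commutant B)
  obtain ⟨k, u, hu, he⟩ := exists_isMatrixUnits hg
    (fun _ hu _ => conj_mem_commutant_iff hu) fun _ _ hc => hreg.exists_eq_smul_one hc
  have : NeZero n := ⟨by rintro rfl; exact hg.support_ne_zero (Fin.sum_univ_zero _)⟩
  have : NeZero k :=
    ⟨by rintro rfl; exact zero_ne_one ((Fin.sum_univ_zero _).symm.trans he.sum_one)⟩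
  have hblock (s s' : Fin k) (i : Fin n) : E₁ (Ad (u s) (g i i)) = E₁ (Ad (u s') (g i i)) := by
    rw [hE₁.map_conj _ (hu s) _ (hg.mem i i), hE₁.map_conj _ (hu s') _ (hg.mem i i)]
  exact ⟨_, inferInstance, inferInstance, E₁, _, hE₁,
    isUnitaryBasis_weyl he (hE₁.map_matrixUnit he hblock)⟩

/-- The unitaries that factor as the product of an element of `B` and an element of its relative
commutant. -/
def productUnitaries (B : StarSubalgebra ℂ 𝒜) : Subgroup (unitary 𝒜) where
  carrier := {u | ∃ b ∈ B, ∃ c ∈ commutant B, (u : 𝒜) = b * c}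
  one_mem' := ⟨1, one_mem _, 1, one_mem _, (one_mul 1).symm⟩
  mul_mem' {u v} := by
    rintro ⟨b, hb, c, hc, hu⟩ ⟨b', hb', c', hc', hv⟩
    refine ⟨b * b', mul_mem hb hb', c * c', mul_mem hc hc', ?_⟩
    rw [Submonoid.coe_mul, hu, hv, Commute.mul_mul_mul_comm (mem_commutant.1 hc b' hb').symm]
  inv_mem' {u} := by
    rintro ⟨b, hb, c, hc, hu⟩
    refine ⟨star b, star_mem hb, star c, star_mem hc, ?_⟩
    rw [← Unitary.star_eq_inv, Unitary.coe_star, hu, star_mul,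
      mem_commutant.1 (star_mem hc) _ (star_mem hb)]

theorem mem_productUnitaries_of_intertwiner [Algebra.IsCentral ℂ B] {u : unitary 𝒜} {a : 𝒜}
    (ha : a ∈ B) (ha₀ : a ≠ 0) (hua : ∀ b ∈ B, Ad u b * a = a * b)
    (hu : u ∈ unitaryNormalizer B) : u ∈ productUnitaries B := by
  have hstar (b : 𝒜) (hb : b ∈ B) : b * star a = star a * Ad u b := by
    simpa only [star_mul, map_star, star_star] using (congrArg star (hua _ (star_mem hb))).symm
  obtain ⟨t, ht⟩ : ∃ t : ℂ, star a * a = t • 1 :=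
    exists_eq_smul_one_of_isCentral B (mul_mem (star_mem ha) ha) fun b hb => by
      rw [← mul_assoc, hstar b hb, mul_assoc, hua b hb, mul_assoc]
  obtain ⟨s, hs⟩ : ∃ s : ℂ, a * star a = s • 1 :=
    exists_eq_smul_one_of_isCentral B (mul_mem ha (star_mem ha)) fun b hb => by
      obtain ⟨b, rfl⟩ := EquivLike.surjective (Ad u) b
      replace hb := (hu b).1 hb
      rw [← mul_assoc, hua b hb, mul_assoc, hstar b hb, mul_assoc]
  have hst : s = t := smul_left_injective ℂ ha₀ <| by
    simpa only [hs, ht, smul_mul_assoc, one_mul, mul_smul_comm, mul_one] using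
      mul_assoc a (star a) a
  have ht₀ : t ≠ 0 := by
    rintro rfl
    exact ha₀ (CStarRing.star_mul_self_eq_zero_iff a |>.1 (by rw [ht, zero_smul]))
  refine ⟨t⁻¹ • a, SMulMemClass.smul_mem _ ha, star a * u, mem_commutant.2 fun b hb => ?_, ?_⟩
  · rw [← mul_assoc, hstar b hb, mul_assoc, conjStarAlgAut_mul_coe, mul_assoc]
  · rw [smul_mul_assoc, ← mul_assoc, hs, hst, smul_mul_assoc, one_mul, inv_smul_smul₀ ht₀]

theorem IsCondExp.map_mul_eq_zero [Algebra.IsCentral ℂ B] (h : IsCondExp (B : Set 𝒜) E)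
    {u : unitary 𝒜} (hu : u ∈ unitaryNormalizer B) (hu' : u ∉ productUnitaries B) {c : 𝒜}
    (hc : c ∈ commutant B) : E (u * c) = 0 := by
  refine by_contra fun hne => hu' (mem_productUnitaries_of_intertwiner (h.1 _) hne ?_ hu)
  intro b hb
  rw [← h.map_mul_left ((hu b).2 hb), ← h.map_mul_right hb, ← mul_assoc, conjStarAlgAut_mul_coe,
    mul_assoc, mem_commutant.1 hc b hb, mul_assoc]

/-- The left cosets in the normalizer of `B` of the unitaries of product form. -/
abbrev NormalizerCoset (B : StarSubalgebra ℂ 𝒜) : Type _ :=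
  unitaryNormalizer B ⧸ (productUnitaries B).subgroupOf (unitaryNormalizer B)

namespace NormalizerCoset

/-- A representative of a coset in the normalizer of `B`. -/
noncomputable def rep (q : NormalizerCoset B) : unitary 𝒜 :=
  (Quotient.out q : unitaryNormalizer B)

lemma rep_mem (q : NormalizerCoset B) : q.rep ∈ unitaryNormalizer B :=
  (Quotient.out q : unitaryNormalizer B).2

lemma eq_mk_iff {q : NormalizerCoset B} {u : unitaryNormalizer B} :
    q = QuotientGroup.mk u ↔ q.rep⁻¹ * u ∈ productUnitaries B := by
  conv_lhs => rw [← QuotientGroup.out_eq' q]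
  exact QuotientGroup.eq

lemma eq_iff_rep_mem {p q : NormalizerCoset B} :
    p = q ↔ p.rep⁻¹ * q.rep ∈ productUnitaries B := by
  conv_lhs => rw [← QuotientGroup.out_eq' q]
  exact eq_mk_iff

/-- The products of the coset representatives with a family `w`. -/
noncomputable def mulFamily (w : ι → 𝒜) (p : NormalizerCoset B × ι) : 𝒜 := p.1.rep * w p.2

theorem map_star_mulFamily_mul {α : Type*} [Algebra.IsCentral ℂ B]
    [DecidableEq (NormalizerCoset B)]
    (h : IsCondExp (B : Set 𝒜) E) {w : α → 𝒜} (hw : ∀ i, w i ∈ commutant B)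
    (p q : NormalizerCoset B × α) :
    E (star (mulFamily w p) * mulFamily w q) =
      if p.1 = q.1 then E (star (w p.2) * w q.2) else 0 := by
  have hassoc : star (mulFamily w p) * mulFamily w q =
      star (w p.2) * (p.1.rep⁻¹ * q.1.rep : unitary 𝒜) * w q.2 := by
    simp only [mulFamily, star_mul, mul_assoc, Submonoid.coe_mul, ← Unitary.star_eq_inv,
      Unitary.coe_star]
  rw [hassoc]
  split_ifs with hpq
  · rw [hpq, inv_mul_cancel, OneMemClass.coe_one, mul_one]
  · let u : unitary 𝒜 := p.1.rep⁻¹ * q.1.rep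
    have hu : u ∈ unitaryNormalizer B := mul_mem (inv_mem p.1.rep_mem) q.1.rep_mem
    obtain ⟨c, hc⟩ := EquivLike.surjective (Ad u) (star (w p.2))
    have hcB : c ∈ commutant B := (conj_mem_commutant_iff hu).1 (hc ▸ star_mem (hw _))
    rw [← hc, conjStarAlgAut_mul_coe, mul_assoc]
    exact h.map_mul_eq_zero hu (fun hu' => hpq (eq_iff_rep_mem.2 hu')) (mul_mem hcB (hw _))

theorem isOrthonormal_mulFamily {α : Type*} [Algebra.IsCentral ℂ B]
    [DecidableEq (NormalizerCoset B)] [DecidableEq α] (h : IsCondExp (B : Set 𝒜) E)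
    {w : α → 𝒜} (hw : ∀ i, w i ∈ commutant B)
    (horth : IsOrthonormal E w) : IsOrthonormal E (mulFamily (B := B) w) := fun p q => by
  rw [map_star_mulFamily_mul h hw, horth, ← ite_and]
  exact if_congr Prod.ext_iff.symm rfl rfl

theorem finite [Nontrivial 𝒜] [Algebra.IsCentral ℂ B] (h : IsCondExp (B : Set 𝒜) E) {l : κ → 𝒜}
    (hl : IsQuasiBasis E l) : Finite (NormalizerCoset B) := by
  classical
  refine not_infinite_iff_finite.1 fun _ => ?_
  obtain ⟨N, hN⟩ := exists_nat_gt ‖∑ k, l k * star (l k)‖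
  obtain ⟨T, rfl⟩ := Infinite.exists_subset_card_eq (NormalizerCoset B) N
  have horth : IsOrthonormal E fun q : T => (q.1.rep : 𝒜) := fun p q => by
    have hgram := map_star_mulFamily_mul h (w := fun _ : Unit => 1) (fun _ => one_mem _)
      (p.1, ()) (q.1, ())
    simpa only [mulFamily, mul_one, star_one, h.map_one, ← Subtype.ext_iff] using hgram
  have hle := CStarAlgebra.norm_le_norm_of_nonneg_of_le
    (Finset.sum_nonneg fun q _ => mul_star_self_nonneg _) (hl.sum_mul_star_le h horth)
  simp only [Unitary.mul_star_self_of_mem (SetLike.coe_mem _), Finset.sum_const,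
    Finset.card_univ, Fintype.card_coe, ← Nat.cast_smul_eq_nsmul ℝ, norm_smul, norm_one, mul_one,
    Real.norm_natCast] at hle
  exact hle.not_gt hN

end NormalizerCoset

lemma IsOrthonormal.sum_mul_map_star_mul [DecidableEq ι] (h : IsCondExp (B : Set 𝒜) E) {v : ι → 𝒜}
    (hv : IsOrthonormal E v) {b : 𝒜} (hb : b ∈ B) (j : ι) :
    ∑ i, v i * E (star (v i) * (v j * b)) = v j * b := by
  simp only [← mul_assoc, h.map_mul_right hb, hv _ j, ite_mul, one_mul, zero_mul, mul_ite, mul_zero,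
    Finset.sum_ite_eq', Finset.mem_univ, if_true]

theorem NormalizerCoset.isQuasiBasis_mulFamily [Algebra.IsCentral ℂ B] [Fintype (NormalizerCoset B)]
    [DecidableEq ι] (hreg : IsRegular (B : Set 𝒜)) (h : IsCondExp (B : Set 𝒜) E) {w : ι → 𝒜}
    (hw : IsUnitaryBasis (commutant B) E w) : IsQuasiBasis E (mulFamily (B := B) w) := by
  classical
  let v : NormalizerCoset B × ι → 𝒜 := mulFamily w
  let T : 𝒜 →ₗ[ℂ] 𝒜 := ∑ p, LinearMap.mulLeft ℂ (v p) ∘ₗ E ∘ₗ LinearMap.mulLeft ℂ (star (v p))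
  have hT (x : 𝒜) : T x = ∑ p, v p * E (star (v p) * x) := by
    simp only [T, LinearMap.sum_apply, LinearMap.comp_apply, LinearMap.mulLeft_apply]
  have hker : ∀ x, x ∈ LinearMap.eqLocus T LinearMap.id := by
    refine hreg.mem_of_normalizer_subset (isClosed_eq ?_ continuous_id) fun u hu => ?_
    · have := h.continuous
      exact (continuous_congr hT).2 (by fun_prop)
    let q : NormalizerCoset B := QuotientGroup.mk ⟨u, hu⟩
    obtain ⟨b, hb, c, hc, hbc⟩ := eq_mk_iff.1 (rfl : q = QuotientGroup.mk ⟨u, hu⟩)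
    obtain ⟨t, rfl⟩ := hw.span c hc
    have hu_eq : (u : 𝒜) = ∑ i, t i • (v (q, i) * b) := by
      calc (u : 𝒜) = (q.rep * (q.rep⁻¹ * u) : unitary 𝒜) := by rw [mul_inv_cancel_left]
        _ = q.rep * ((∑ i, t i • w i) * b) := by
          rw [Submonoid.coe_mul, ← mem_commutant.1 hc b hb, ← hbc]
        _ = _ := by
          simp only [v, mulFamily, Finset.sum_mul, Finset.mul_sum, smul_mul_assoc, mul_smul_comm,
            mul_assoc]
    rw [hu_eq]
    refine sum_mem fun i _ => Submodule.smul_mem _ _ ?_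
    exact (hT _).trans <|
      (isOrthonormal_mulFamily h hw.mem hw.orthonormal).sum_mul_map_star_mul h hb _
  exact fun x => (hT x).symm.trans (hker x)

namespace IsQuasiBasis

variable {E₀ E₁ : 𝒜 →ₗ[ℂ] 𝒜} {l : κ → 𝒜} {v : ι → 𝒜}

lemma of_forall_sum_mul_map_star_mul (h : IsCondExp (B : Set 𝒜) E) (hl : IsQuasiBasis E l)
    (hv : ∀ k, ∑ i, v i * E (star (v i) * l k) = l k) : IsQuasiBasis E v := fun x => calc
  _ = ∑ k, (∑ i, v i * E (star (v i) * l k)) * E (star (l k) * x) := by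
    simp only [Finset.sum_mul, mul_assoc]
    rw [Finset.sum_comm]
    simp only [← Finset.mul_sum, ← hl.map_star_mul_eq_sum h (v _)]
  _ = x := by simp only [hv, hl x]

/-- Applying `E₁` to the residual sum of squares of `v` over `E₀` leaves at most the difference of
the two indices. -/
theorem of_sum_mul_star_le [DecidableEq ι] (h₀ : IsCondExp (B : Set 𝒜) E₀)
    (hl : IsQuasiBasis E₀ l) (h₁ : IsCondExp (B : Set 𝒜) E₁) (hv : IsQuasiBasis E₁ v)
    (hgram : ∀ i j, E₁ (v i * E₀ (star (v i) * v j) * star (v j)) =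
      if i = j then E₁ (v i * star (v i)) else 0)
    (hle : ∑ k, l k * star (l k) ≤ ∑ i, v i * star (v i)) : IsQuasiBasis E₀ v := by
  have bessel := congrArg E₁ (hl.sum_residual_mul_star h₀ v)
  have cross : E₁ (∑ i, ∑ j, v i * E₀ (star (v i) * v j) * star (v j)) =
      E₁ (∑ i, v i * star (v i)) := by
    simp only [map_sum, hgram, Finset.sum_ite_eq, Finset.mem_univ, if_true]
  rw [map_add, cross, ← map_add, sub_add_cancel, map_sum] at bessel
  have hnonpos : E₁ (∑ k, l k * star (l k) - ∑ i, v i * star (v i)) ≤ 0 := by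
    rw [← neg_nonneg, ← map_neg, neg_sub]
    exact h₁.map_nonneg (sub_nonneg.2 hle)
  have hnonneg (k : κ) := h₁.map_nonneg
    (mul_star_self_nonneg (l k - ∑ i, v i * E₀ (star (v i) * l k)))
  have hzero := (Finset.sum_eq_zero_iff_of_nonneg fun k _ => hnonneg k).1
    ((bessel.trans_le hnonpos).antisymm (Finset.sum_nonneg fun k _ => hnonneg k))
  refine hl.of_forall_sum_mul_map_star_mul h₀ fun k => (sub_eq_zero.1 (star_eq_zero.1 ?_)).symm
  exact hv.eq_zero_of_map_star_mul_self_eq_zero h₁ (by rw [star_star, hzero k (Finset.mem_univ k)])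

lemma isOrthonormal [DecidableEq ι] (h₀ : IsCondExp (B : Set 𝒜) E₀) (hv : IsQuasiBasis E₀ v)
    (h₁ : IsCondExp (B : Set 𝒜) E₁) (hv₁ : IsOrthonormal E₁ v) : IsOrthonormal E₀ v := fun i j => by
  have hexpand : E₁ (star (v i) * v j) = E₀ (star (v i) * v j) := by
    conv_lhs => rw [← hv (v j)]
    simp only [Finset.mul_sum, ← mul_assoc, map_sum, h₁.map_mul_right (h₀.1 _), hv₁ i _, ite_mul,
      one_mul, zero_mul, Finset.sum_ite_eq, Finset.mem_univ, if_true]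
  rw [← hexpand, hv₁]

end IsQuasiBasis

namespace NormalizerCoset

variable {E₀ E₁ : 𝒜 →ₗ[ℂ] 𝒜} {w : ι → 𝒜}

lemma mulFamily_mem_unitary {α : Type*} {w : α → 𝒜} (hw : ∀ i, w i ∈ unitary 𝒜)
    (p : NormalizerCoset B × α) : mulFamily w p ∈ unitary 𝒜 :=
  mul_mem p.1.rep.2 (hw p.2)

theorem map_mulFamily_gram [DecidableEq ι] [DecidableEq (NormalizerCoset B)]
    [Algebra.IsCentral ℂ B] (h₀ : IsCondExp (B : Set 𝒜) E₀) (h₁ : IsTracialCondExp B E₁)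
    (hw : IsUnitaryBasis (commutant B) E₁ w) (p q : NormalizerCoset B × ι) :
    E₁ (mulFamily w p * E₀ (star (mulFamily w p) * mulFamily w q) * star (mulFamily w q)) =
      if p = q then E₁ (mulFamily w p * star (mulFamily w p)) else 0 := by
  split_ifs with hpq
  · rw [← hpq, Unitary.star_mul_self_of_mem (mulFamily_mem_unitary hw.mem_unitary p), h₀.map_one,
      mul_one]
  rw [map_star_mulFamily_mul h₀ hw.mem]
  split_ifs with hcoset
  · obtain ⟨t, ht⟩ := h₀.exists_map_eq_smul_one (mul_mem (star_mem (hw.mem p.2)) (hw.mem q.2))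
    have hne : q.2 ≠ p.2 := fun h => hpq (Prod.ext hcoset h.symm)
    have hconj : mulFamily w p * (t • 1) * star (mulFamily w q) =
        t • Ad p.1.rep (w p.2 * star (w q.2)) := by
      simp only [mulFamily, ← hcoset, Unitary.conjStarAlgAut_apply, mul_smul_comm, smul_mul_assoc,
        mul_one, star_mul, mul_assoc]
    rw [ht, hconj, map_smul, h₁.map_conj _ p.1.rep_mem _ (mul_mem (hw.mem _) (star_mem (hw.mem _))),
      h₁.map_mul_comm _ (hw.mem _) _ (star_mem (hw.mem _)), hw.orthonormal, if_neg hne, smul_zero]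
  · rw [mul_zero, zero_mul, map_zero]

end NormalizerCoset

theorem IsMinimalCondExp.exists_isQuasiBasis.{u} {E₀ : 𝒜 →ₗ[ℂ] 𝒜}
    (hE₀ : IsMinimalCondExp (B : Set 𝒜) E₀) :
    ∃ (n : ℕ) (l : Fin n → 𝒜), IsQuasiBasis E₀ l ∧ ∀ E₁, IsCondExp (B : Set 𝒜) E₁ →
      ∀ {α : Type u} [Fintype α] (v : α → 𝒜), (∀ i, v i ∈ unitary 𝒜) → IsQuasiBasis E₁ v →
        ∑ k, l k * star (l k) ≤ ∑ i, v i * star (v i) := by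
  obtain ⟨h₀, r₀, n, l, hl, hr₀, hmin⟩ := hE₀
  refine ⟨n, l, (isQuasiBasis_iff_isRightQB h₀).2 hl, fun E₁ h₁ α _ v hunit hv => ?_⟩
  have hsum : ∑ i, v i * star (v i) = ((Fintype.card α : ℝ) : ℂ) • 1 := by
    simp only [Unitary.mul_star_self_of_mem (hunit _), Finset.sum_const, Finset.card_univ,
      Complex.ofReal_natCast, Nat.cast_smul_eq_nsmul]
  let e := (Fintype.equivFin α).symm
  have hr : r₀ ≤ Fintype.card α :=
    hmin E₁ h₁ _ (v ∘ e) ((isQuasiBasis_iff_isRightQB h₁).1 (hv.comp_equiv e)) _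
      ((e.sum_comp fun i => v i * star (v i)).trans hsum)
  rw [hr₀, hsum]
  exact smul_le_smul_of_nonneg_right (Complex.real_le_real.2 hr) zero_le_one

theorem minimal_CE_of_regular_inclusion_has_unitary_ON_quasi_basis_general
    [Algebra.IsCentral ℂ 𝒜] [Algebra.IsCentral ℂ B] (hreg : IsRegular (B : Set 𝒜))
    {E₀ : 𝒜 →ₗ[ℂ] 𝒜} (hE₀ : IsMinimalCondExp (B : Set 𝒜) E₀) :
    ∃ (m : ℕ) (v : Fin m → 𝒜), (∀ k, v k ∈ unitary 𝒜) ∧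
      (∀ k k', E₀ (star (v k) * v k') = if k = k' then 1 else 0) ∧
      ∀ x, x = ∑ k, E₀ (x * v k) * star (v k) := by
  classical
  cases subsingleton_or_nontrivial 𝒜
  · exact ⟨0, Fin.elim0, Fin.rec0, Fin.rec0, fun _ => Subsingleton.elim _ _⟩
  obtain ⟨n, l, hl, hle⟩ := hE₀.exists_isQuasiBasis
  obtain ⟨ι, _, _, E₁, w, h₁, hw⟩ := exists_isTracialCondExp_isUnitaryBasis hreg hE₀.1 hl
  have := NormalizerCoset.finite hE₀.1 hl
  let _ := Fintype.ofFinite (NormalizerCoset B)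
  let v : NormalizerCoset B × ι → 𝒜 := NormalizerCoset.mulFamily w
  have hunit (p) : v p ∈ unitary 𝒜 := NormalizerCoset.mulFamily_mem_unitary hw.mem_unitary p
  have hv₁ : IsQuasiBasis E₁ v := NormalizerCoset.isQuasiBasis_mulFamily hreg h₁.isCondExp hw
  have hv : IsQuasiBasis E₀ v := hl.of_sum_mul_star_le hE₀.1 h₁.isCondExp hv₁
    (NormalizerCoset.map_mulFamily_gram hE₀.1 h₁ hw) (hle _ h₁.isCondExp v hunit hv₁)
  have horth : IsOrthonormal E₀ v := hv.isOrthonormal hE₀.1 h₁.isCondExp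
    (NormalizerCoset.isOrthonormal_mulFamily h₁.isCondExp hw.mem hw.orthonormal)
  let e := (Fintype.equivFin (NormalizerCoset B × ι)).symm
  exact ⟨_, v ∘ e, fun k => hunit _,
    fun k k' => (horth _ _).trans (if_congr e.injective.eq_iff rfl rfl),
    (isQuasiBasis_iff_eq_sum_mul_star hE₀.1).1 (hv.comp_equiv e)⟩

end Positivity

/-- the minimal conditional expectation of a regular inclusion `B ⊂ A` of
simple unital C*-algebras with a finite-index conditional expectation admits a unitary
orthonormal quasi-basis. -/
theorem minimal_CE_of_regular_inclusion_has_unitary_ON_quasi_basis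
    (B : StarSubalgebra ℂ A) (hBclosed : IsClosed (B : Set A))
    (hAsimple : IsSimpleCStar (Set.univ : Set A))
    (hBsimple : IsSimpleCStar (B : Set A))
    (hreg : IsRegular (B : Set A))
    (E : A →ₗ[ℂ] A) (hE : IsCondExp (B : Set A) E)
    (nE : ℕ) (lE : Fin nE → A) (hlE : IsRightQB E lE)
    (E₀ : A →ₗ[ℂ] A) (hE₀ : IsMinimalCondExp (B : Set A) E₀) :
    ∃ (m : ℕ) (v : Fin m → A),
      (∀ k, v k ∈ unitary A) ∧
      (∀ k l, E₀ (star (v k) * v l) = if k = l then (1 : A) else 0) ∧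
      (∀ x : A, x = ∑ k, E₀ (x * v k) * star (v k)) := by
  let _ : CStarAlgebra A := {}
  have := hBsimple.isCentral hBclosed
  have := hAsimple.isCentral_of_univ
  exact minimal_CE_of_regular_inclusion_has_unitary_ON_quasi_basis_general hreg hE₀

end RegularInclusion
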